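/- arXiv:math/0607471 — 2 statements merged into one kernel-verified Lean document; each statement's English description precedes it below -/
import Mathlib

section
/- Let ν ∈ ℝ be not an integer. Then the set { z ∈ ℂ : z ∉ (−∞, 0] and K_ν(z) = 0 } is finite; that is, for real order the Macdonald function has only finitely many zeros in the principal Riemann sheet. -/
open Complex Asymptotics

/-- The entire series `∑ (z²/4)^k / (k! (a)_k)` appearing in the ascending expansion
of the Macdonald function (with `a = 1 ∓ ν`). -/
noncomputable def macdonaldS (a z : ℂ) : ℂ :=
  ∑' k : ℕ, (z ^ 2 / 4) ^ k / ((k.factorial : ℂ) * (ascPochhammer ℂ k).eval a)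

/-- The Macdonald function `K_ν(z)` defined by its ascending series, for `ν` not an
integer and `z` off the cut `(-∞, 0]`, with principal complex powers. -/
noncomputable def macdonaldK (ν z : ℂ) : ℂ :=
  ((Real.pi : ℂ) / 2) / Complex.sin (ν * (Real.pi : ℂ)) *
    ((z / 2) ^ (-ν) / Complex.Gamma (1 - ν) * macdonaldS (1 - ν) z -
     (z / 2) ^ ν / Complex.Gamma (1 + ν) * macdonaldS (1 + ν) z)

/-!
Write `K_ν(z) = (z / 2) ^ ν 𝒦_ν(z ^ 2 / 4)`. For positive `y`, Sommerfeld's integral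
`∫_0^∞ t^{ν-1} e^{-1/t-yt} dt` obeys the same differentiation rule `X_ν' = -X_{ν+1}` and reflection
rule `X_{-ν}(y) = y ^ ν X_ν(y)` as `2 𝒦_ν(y)`; the pair `(X_ν, X_{-(ν+1)})` therefore solves a
first-order linear system. For `-1 < ν < 0` the two solutions agree at `0`, so the Wronskian with
Sommerfeld's own solution identifies them. A second Wronskian, now at infinity, identifies
Sommerfeld's integral with a multiple of Schläfli's integral `∫_1^∞ (t ^ 2 - 1)^{ν-1/2} e^{-xt} dt`,
that is, of Hankel's integral, which has an analytic continuation to the whole cut plane and an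
explicit nonzero limit at infinity. Hence `e ^ z z ^ {1/2} K_ν(z)` tends to a nonzero constant,
uniformly up to the cut, when `ν ≥ 3/2`, and the recurrence
`K_ν = K_{ν+2} - 2 (ν + 1) / z K_{ν+1}` carries this down to every noninteger real `ν`. So the zeros
are bounded.

As `K_{-ν} = K_ν`, we may take `ν > 0`. In the variable `w = log (z / 2)`, a constant multiple of
`K_ν` is an entire function asymptotic to `e^{-νw} / Γ(1 - ν)` as `Re w → -∞`. The zeros thus lie in
a compact rectangle of the `w`-plane, on which a nonzero entire function has finitely many zeros.
-/

open Filter Topology Set MeasureTheory Bornology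

section BesselClifford

/-- The Bessel–Clifford function `C_ν(y) = ∑ y ^ k / (k! Γ(ν + 1 + k))`, an entire function of
`y` for every order `ν`, related to the modified Bessel function by
`I_ν(z) = (z / 2) ^ ν C_ν(z ^ 2 / 4)`. Terms with `ν + 1 + k` a pole of `Γ` vanish, in
accordance with Mathlib's junk value `Γ = 0` there. -/
noncomputable def besselClifford (ν y : ℂ) : ℂ := regularizedHGFun 0 {ν + 1} y

theorem hasFPowerSeriesOnBall_besselClifford (ν : ℂ) :
    HasFPowerSeriesOnBall (besselClifford ν) (regularizedHGFunSeries 0 {ν + 1}) 0 ⊤ := by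
  have hr : (regularizedHGFunSeries 0 {ν + 1}).radius = ⊤ :=
    radius_regularizedHGFunSeries_eq_top (by simp)
  have h := (regularizedHGFunSeries 0 {ν + 1}).hasFPowerSeriesOnBall (hr ▸ ENNReal.zero_lt_top)
  rwa [hr] at h

theorem hasSum_besselClifford (ν y : ℂ) :
    HasSum (fun k : ℕ => y ^ k / (k.factorial * Gamma (ν + 1 + k))) (besselClifford ν y) := by
  have h := (hasFPowerSeriesOnBall_besselClifford ν).hasSum (y := y) (by simp)
  simpa [FormalMultilinearSeries.apply_eq_pow_smul_coeff, regularizedHGFunCoeff, div_eq_mul_inv]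
    using h

theorem hasDerivAt_besselClifford (ν y : ℂ) :
    HasDerivAt (besselClifford ν) (besselClifford (ν + 1) y) y := by
  have hd : DifferentiableAt ℂ (besselClifford ν) y :=
    ((hasFPowerSeriesOnBall_besselClifford ν).differentiableOn y (by simp)).differentiableAt
      (by simp)
  have hs : HasSum (fun k : ℕ => y ^ k / (k.factorial * Gamma (ν + 1 + 1 + k)))
      (deriv (besselClifford ν) y) := by
    have h := ((hasFPowerSeriesOnBall_besselClifford ν).fderiv.hasSum (y := y) (by simp)).mapL
      (ContinuousLinearMap.apply ℂ ℂ (1 : ℂ))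
    simp only [zero_add, ContinuousLinearMap.apply_apply, fderiv_apply_one_eq_deriv] at h
    refine h.congr_fun fun k => ?_
    have hΓ : ν + 1 + 1 + k = ν + 1 + (k + 1 : ℕ) := by push_cast; ring
    rw [FormalMultilinearSeries.apply_eq_pow_smul_coeff, smul_apply,
      FormalMultilinearSeries.derivSeries_coeff_one, regularizedHGFunSeries_coeff, hΓ]
    simp only [regularizedHGFunCoeff, Multiset.map_zero, Multiset.prod_zero,
      Multiset.map_singleton, Multiset.prod_singleton, Nat.factorial_succ, Nat.cast_mul,
      smul_eq_mul, nsmul_eq_mul]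
    have hk : ((k + 1 : ℕ) : ℂ) ≠ 0 := Nat.cast_ne_zero.2 k.succ_ne_zero
    rw [mul_assoc ((k + 1 : ℕ) : ℂ), mul_one_div, div_mul_cancel_left₀ hk, ← div_eq_mul_inv]
  exact (hs.unique (hasSum_besselClifford (ν + 1) y)) ▸ hd.hasDerivAt

theorem besselClifford_zero_right (ν : ℂ) : besselClifford ν 0 = 1 / Gamma (ν + 1) := by
  simpa using (hasSum_besselClifford ν 0).unique (hasSum_single 0 fun k hk => by simp [hk])

theorem besselClifford_eq_add (ν y : ℂ) :
    besselClifford ν y = (ν + 1) * besselClifford (ν + 1) y + y * besselClifford (ν + 2) y := by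
  have hshift : HasSum (fun k : ℕ => k * (y ^ k / (k.factorial * Gamma (ν + 1 + 1 + k))))
      (y * besselClifford (ν + 2) y) := by
    have h := HasSum.zero_add (f := fun k : ℕ =>
      k * (y ^ k / (k.factorial * Gamma (ν + 1 + 1 + k)))) (m := y * besselClifford (ν + 2) y)
    simp only [CharP.cast_eq_zero, zero_mul, zero_add] at h
    refine h (((hasSum_besselClifford (ν + 2) y).mul_left y).congr_fun fun k => ?_)
    have hΓ : ν + 1 + 1 + (k + 1 : ℕ) = ν + 2 + 1 + k := by push_cast; ring
    have hk : ((k + 1 : ℕ) : ℂ) ≠ 0 := Nat.cast_ne_zero.2 k.succ_ne_zero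
    rw [hΓ, Nat.factorial_succ, Nat.cast_mul, pow_succ']
    field_simp
  refine (hasSum_besselClifford ν y).unique ?_
  refine (((hasSum_besselClifford (ν + 1) y).mul_left (ν + 1)).add hshift).congr_fun fun k => ?_
  rw [← add_mul, ← div_div, ← div_div, div_eq_mul_inv _ (Gamma _), div_eq_mul_inv _ (Gamma _),
    one_div_Gamma_eq_self_mul_one_div_Gamma_add_one, add_right_comm (ν + 1) 1 (k : ℂ)]
  ring

theorem macdonaldS_div_Gamma (a z : ℂ) (ha : ∀ k : ℕ, a ≠ -k) :
    macdonaldS a z / Gamma a = besselClifford (a - 1) ((z / 2) ^ 2) := by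
  rw [← (hasSum_besselClifford _ _).tsum_eq, macdonaldS, ← tsum_div_const]
  refine tsum_congr fun k => ?_
  rw [← Gamma_add_nat_div_Gamma_eq a ha, sub_add_cancel, div_pow z 2 2]
  have := Gamma_ne_zero ha
  field_simp
  norm_num

end BesselClifford

section Macdonald

theorem macdonaldK_eq_besselClifford {ν : ℂ} (hν : ∀ n : ℤ, ν ≠ n) (z : ℂ) :
    macdonaldK ν z = Real.pi / 2 / sin (ν * Real.pi) *
      ((z / 2) ^ (-ν) * besselClifford (-ν) ((z / 2) ^ 2)
        - (z / 2) ^ ν * besselClifford ν ((z / 2) ^ 2)) := by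
  have hm : ∀ k : ℕ, 1 - ν ≠ -k := fun k h => hν (k + 1) (by push_cast; linear_combination -h)
  have hp : ∀ k : ℕ, 1 + ν ≠ -k := fun k h => hν (-k - 1) (by push_cast; linear_combination h)
  rw [macdonaldK, div_mul_comm ((z / 2) ^ (-ν)), div_mul_comm ((z / 2) ^ ν),
    macdonaldS_div_Gamma _ _ hm, macdonaldS_div_Gamma _ _ hp, sub_sub_cancel_left,
    add_sub_cancel_left, mul_comm (besselClifford _ _), mul_comm (besselClifford _ _)]

theorem macdonaldK_neg (ν z : ℂ) : macdonaldK (-ν) z = macdonaldK ν z := by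
  simp only [macdonaldK, neg_neg, sub_neg_eq_add, ← sub_eq_add_neg, neg_mul, sin_neg]
  ring

theorem sin_mul_pi_ne_zero {ν : ℂ} (hν : ∀ n : ℤ, ν ≠ n) : sin (ν * Real.pi) ≠ 0 := fun h => by
  obtain ⟨n, hn⟩ := sin_eq_zero_iff.1 h
  exact hν n (mul_right_cancel₀ (ofReal_ne_zero.2 Real.pi_ne_zero) hn)

theorem div_two_mem_slitPlane {z : ℂ} (hz : z ∈ slitPlane) : z / 2 ∈ slitPlane := by
  rw [mem_slitPlane_iff] at *
  simpa using hz

theorem differentiableOn_macdonaldK {ν : ℂ} (hν : ∀ n : ℤ, ν ≠ n) :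
    DifferentiableOn ℂ (macdonaldK ν) slitPlane := by
  have hC : ∀ μ : ℂ, Differentiable ℂ (besselClifford μ) := fun μ y =>
    (hasDerivAt_besselClifford μ y).differentiableAt
  refine DifferentiableOn.congr (fun z hz => ?_) fun z _ => macdonaldK_eq_besselClifford hν z
  have hz2 := div_two_mem_slitPlane hz
  have hcpow : ∀ μ : ℂ, DifferentiableAt ℂ (fun z : ℂ => (z / 2) ^ μ) z := fun μ =>
    (differentiableAt_id.div_const 2).cpow_const hz2
  have hcomp : ∀ μ : ℂ, DifferentiableAt ℂ (fun z : ℂ => besselClifford μ ((z / 2) ^ 2)) z :=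
    fun μ => ((hC μ).comp ((differentiable_id.div_const 2).pow 2)).differentiableAt
  exact ((((hcpow _).mul (hcomp _)).sub ((hcpow _).mul (hcomp _))).const_mul
    _).differentiableWithinAt

theorem macdonaldK_eq_sub {ν z : ℂ} (hν : ∀ n : ℤ, ν ≠ n) (hz : z ≠ 0) :
    macdonaldK ν z = macdonaldK (ν + 2) z - 2 * (ν + 1) / z * macdonaldK (ν + 1) z := by
  have h1 : ∀ n : ℤ, ν + 1 ≠ n := fun n h => hν (n - 1) (by push_cast; linear_combination h)
  have h2 : ∀ n : ℤ, ν + 2 ≠ n := fun n h => hν (n - 2) (by push_cast; linear_combination h)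
  have hw : z / 2 ≠ 0 := div_ne_zero hz two_ne_zero
  have hs1 : sin ((ν + 1) * Real.pi) = -sin (ν * Real.pi) := by
    rw [add_mul, one_mul, sin_add_pi]
  have hs2 : sin ((ν + 2) * Real.pi) = sin (ν * Real.pi) := by rw [add_mul, sin_add_two_pi]
  have hpow : ∀ μ : ℂ, (z / 2) ^ (μ + 1) = (z / 2) ^ μ * (z / 2) := fun μ => by
    rw [cpow_add _ _ hw, cpow_one]
  have hC := besselClifford_eq_add ν ((z / 2) ^ 2)
  have hC' := besselClifford_eq_add (-(ν + 2)) ((z / 2) ^ 2)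
  rw [show -(ν + 2) + 1 = -(ν + 1) by ring, show -(ν + 2) + 2 = -ν by ring] at hC'
  rw [macdonaldK_eq_besselClifford hν, macdonaldK_eq_besselClifford h1,
    macdonaldK_eq_besselClifford h2, hs1, hs2, hC, hC',
    show (z / 2) ^ (-ν) = (z / 2) ^ (-(ν + 2) + 1 + 1) by ring_nf,
    show (z / 2) ^ (-(ν + 1)) = (z / 2) ^ (-(ν + 2) + 1) by ring_nf,
    show (z / 2) ^ (ν + 2) = (z / 2) ^ (ν + 1 + 1) by ring_nf]
  simp only [hpow]
  field_simp
  ring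

end Macdonald

section BesselCliffordSecond

/-- The second-kind companion of `besselClifford`, normalised so that
`K_ν(z) = (z / 2) ^ ν 𝒦_ν(z ^ 2 / 4)`. It turns the Bessel equation into the first-order relations
`𝒦_ν' = -𝒦_{ν+1}` and `𝒦_{-ν}(y) = y ^ ν 𝒦_ν(y)`. -/
noncomputable def besselCliffordK (ν y : ℂ) : ℂ :=
  Real.pi / 2 / sin (ν * Real.pi) * (y ^ (-ν) * besselClifford (-ν) y - besselClifford ν y)

theorem macdonaldK_eq_besselCliffordK {ν : ℂ} (hν : ∀ n : ℤ, ν ≠ n) {x : ℝ} (hx : 0 < x) :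
    macdonaldK ν x = (x / 2 : ℂ) ^ ν * besselCliffordK ν ((x ^ 2 / 4 : ℝ) : ℂ) := by
  have hw : (x / 2 : ℂ) ≠ 0 := by simp [hx.ne']
  have hsq : ((x ^ 2 / 4 : ℝ) : ℂ) = (x / 2 : ℂ) ^ 2 := by push_cast; ring
  have hpow : ((x / 2 : ℂ) ^ 2) ^ (-ν) = (x / 2 : ℂ) ^ (-ν) * (x / 2 : ℂ) ^ (-ν) := by
    have h0 : 0 ≤ x / 2 := (half_pos hx).le
    rw [sq, show (x / 2 : ℂ) = ((x / 2 : ℝ) : ℂ) by push_cast; rfl,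
      mul_cpow_ofReal_nonneg h0 h0]
  have hinv : (x / 2 : ℂ) ^ ν * (x / 2 : ℂ) ^ (-ν) = 1 := by
    rw [← cpow_add _ _ hw, add_neg_cancel, cpow_zero]
  rw [macdonaldK_eq_besselClifford hν, besselCliffordK, hsq, hpow]
  linear_combination -(Real.pi / 2 / sin (ν * Real.pi) * (x / 2 : ℂ) ^ (-ν) *
    besselClifford (-ν) ((x / 2) ^ 2)) * hinv

theorem besselCliffordK_neg (ν : ℂ) {y : ℂ} (hy : y ≠ 0) :
    besselCliffordK (-ν) y = y ^ ν * besselCliffordK ν y := by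
  have h : y ^ ν * y ^ (-ν) = 1 := by rw [← cpow_add _ _ hy, add_neg_cancel, cpow_zero]
  rw [besselCliffordK, besselCliffordK, neg_neg, neg_mul, sin_neg, div_neg]
  linear_combination Real.pi / 2 / sin (ν * Real.pi) * -besselClifford (-ν) y * h

theorem hasDerivAt_besselCliffordK (ν : ℂ) {y : ℂ} (hy : y ∈ slitPlane) :
    HasDerivAt (besselCliffordK ν) (-besselCliffordK (ν + 1) y) y := by
  have hpow : y ^ (-ν) = y ^ (-ν - 1) * y := by
    rw [cpow_sub _ _ (slitPlane_ne_zero hy), cpow_one, div_mul_cancel₀ _ (slitPlane_ne_zero hy)]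
  have hrec := besselClifford_eq_add (-ν - 1) y
  rw [sub_add_cancel, show -ν - 1 + 2 = -ν + 1 by ring] at hrec
  have h := ((((hasStrictDerivAt_id y).cpow_const (c := -ν) hy).hasDerivAt.mul
    (hasDerivAt_besselClifford (-ν) y)).sub
      (hasDerivAt_besselClifford ν y)).const_mul ((Real.pi : ℂ) / 2 / sin (ν * Real.pi))
  convert! h using 1
  rw [besselCliffordK, neg_add', hrec, add_mul ν, one_mul, sin_add_pi]
  simp only [id_eq, hpow]
  ring

theorem tendsto_besselCliffordK_zero {ν : ℝ} (hν : ∀ n : ℤ, ν ≠ n) (hneg : ν < 0) :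
    Tendsto (fun y : ℝ => besselCliffordK ν y) (𝓝[>] 0) (𝓝 (Gamma (-ν) / 2)) := by
  have hΓ : Gamma (-ν) / 2 = Real.pi / 2 / sin (ν * Real.pi) *
      (0 ^ (-ν : ℂ) * besselClifford (-ν) 0 - besselClifford ν 0) := by
    have hΓ0 : Gamma (ν + 1 : ℂ) ≠ 0 := Gamma_ne_zero fun k h =>
      hν (-k - 1) (by exact_mod_cast eq_sub_of_add_eq h)
    have hrefl := Gamma_mul_Gamma_one_sub (-ν : ℂ)
    rw [sub_neg_eq_add, add_comm, mul_neg, sin_neg, mul_comm (Real.pi : ℂ), div_neg] at hrefl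
    rw [zero_cpow (by simpa using hneg.ne), zero_mul, zero_sub, besselClifford_zero_right,
      eq_div_of_mul_eq hΓ0 hrefl]
    have := sin_mul_pi_ne_zero (ν := ν) (by exact_mod_cast hν)
    field_simp
  have hC : ∀ μ : ℂ, Continuous fun y : ℝ => besselClifford μ y := fun μ =>
    (continuous_iff_continuousAt.2 fun y =>
      (hasDerivAt_besselClifford μ y).continuousAt).comp continuous_ofReal
  have hpow : Continuous fun y : ℝ => (y : ℂ) ^ (-ν : ℂ) :=
    continuous_ofReal_cpow_const (by simpa using hneg)
  have h := ((((hpow.mul (hC (-ν))).sub (hC ν)).const_mul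
    ((Real.pi : ℂ) / 2 / sin (ν * Real.pi))).tendsto 0).mono_left
      (nhdsWithin_le_nhds (s := Ioi 0))
  rw [hΓ]
  simpa only [Pi.sub_apply, Pi.mul_apply, ofReal_zero] using! h

end BesselCliffordSecond

section Laplace

/-- The Laplace transform `∫_a^∞ w(t) e^{-xt} dt` of a weight carried by the half-line `(a, ∞)`. -/
noncomputable def laplaceIoi (a : ℝ) (w : ℝ → ℝ) (x : ℝ) : ℝ :=
  ∫ t in Ioi a, w t * Real.exp (-(x * t))

/-- Absolute convergence of the Laplace integral of `w` over `(a, ∞)` at every `x > 0`. -/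
def LaplaceIntegrable (a : ℝ) (w : ℝ → ℝ) : Prop :=
  ∀ ⦃x : ℝ⦄, 0 < x → IntegrableOn (fun t => w t * Real.exp (-(x * t))) (Ioi a)

variable {a : ℝ} {w : ℝ → ℝ}

theorem mul_exp_neg_mul_le {x t : ℝ} (hx : 0 < x) : t * Real.exp (-(x * t)) ≤ x⁻¹ := by
  have h : x * t * Real.exp (-(x * t)) ≤ 1 :=
    (Real.mul_exp_neg_le_exp_neg_one _).trans (Real.exp_le_one_iff.2 (by norm_num))
  rw [← one_div, le_div_iff₀ hx]
  linarith

theorem LaplaceIntegrable.id_mul (ha : 0 ≤ a) (hw : LaplaceIntegrable a w) :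
    LaplaceIntegrable a fun t => t * w t := fun x hx => by
  have hb : ∀ᵐ t ∂volume.restrict (Ioi a), ‖t * Real.exp (-(x / 2 * t))‖ ≤ (x / 2)⁻¹ := by
    filter_upwards [ae_restrict_mem measurableSet_Ioi] with t ht
    rw [Real.norm_of_nonneg (mul_nonneg (ha.trans ht.le) (Real.exp_pos _).le)]
    exact mul_exp_neg_mul_le (half_pos hx)
  refine ((hw (half_pos hx)).bdd_mul (by fun_prop) hb).congr (Eventually.of_forall fun t => ?_)
  beta_reduce
  rw [mul_mul_mul_comm, ← Real.exp_add]
  ring_nf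

theorem LaplaceIntegrable.hasDerivAt (ha : 0 ≤ a) (hw : LaplaceIntegrable a w) {x : ℝ}
    (hx : 0 < x) : HasDerivAt (laplaceIoi a w) (-laplaceIoi a (fun t => t * w t) x) x := by
  have hx2 := half_pos hx
  have h := hasDerivAt_integral_of_dominated_loc_of_deriv_le (μ := volume.restrict (Ioi a))
    (F := fun x t => w t * Real.exp (-(x * t)))
    (F' := fun x t => -(t * w t * Real.exp (-(x * t))))
    (bound := fun t => |t * w t * Real.exp (-(x / 2 * t))|) (Ioi_mem_nhds (half_lt_self hx))
    (eventually_of_mem (Ioi_mem_nhds hx) fun y hy => (hw hy).aestronglyMeasurable) (hw hx)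
    ((hw.id_mul ha) hx).neg.aestronglyMeasurable ?_ ((hw.id_mul ha) hx2).abs ?_
  · rw [laplaceIoi, ← integral_neg]
    exact h.2
  · filter_upwards [ae_restrict_mem measurableSet_Ioi] with t ht y hy
    have ht0 : 0 ≤ t := ha.trans ht.le
    rw [norm_neg, Real.norm_eq_abs, abs_mul, abs_mul (t * w t), Real.abs_exp, Real.abs_exp]
    have : x / 2 ≤ y := (mem_Ioi.1 hy).le
    gcongr
  · filter_upwards with t y _
    have h := (((hasDerivAt_id y).mul_const t).neg.exp).const_mul (w t)
    convert! h using 1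
    simp only [id_eq, Pi.neg_apply, one_mul, mul_neg, neg_inj]
    ring

theorem LaplaceIntegrable.laplaceIoi_pos (hw : LaplaceIntegrable a w)
    (hpos : ∀ t, a < t → 0 < w t) {x : ℝ} (hx : 0 < x) : 0 < laplaceIoi a w x :=
  (setIntegral_pos_iff_support_of_nonneg_ae
    ((ae_restrict_mem measurableSet_Ioi).mono fun t ht =>
      (mul_pos (hpos t ht) (Real.exp_pos _)).le) (hw hx)).2 <| by
    have hsupp : Ioi a ⊆ Function.support fun t => w t * Real.exp (-(x * t)) := fun t ht =>
      (mul_pos (hpos t ht) (Real.exp_pos _)).ne'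
    rw [inter_eq_right.2 hsupp, Real.volume_Ioi]
    exact ENNReal.zero_lt_top

theorem LaplaceIntegrable.abs_laplaceIoi_le (hw : LaplaceIntegrable a w) {x y : ℝ} (hy : 0 < y)
    (hxy : y ≤ x) :
    |laplaceIoi a w x| ≤ Real.exp (-((x - y) * a)) * laplaceIoi a (fun t => |w t|) y := by
  have habs : IntegrableOn (fun t => |w t| * Real.exp (-(y * t))) (Ioi a) := by
    simpa only [IntegrableOn, abs_mul, Real.abs_exp] using (hw hy).abs
  rw [laplaceIoi, laplaceIoi, ← integral_const_mul, ← Real.norm_eq_abs]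
  refine norm_integral_le_of_norm_le (habs.const_mul _) ?_
  filter_upwards [ae_restrict_mem measurableSet_Ioi] with t ht
  rw [norm_mul, Real.norm_eq_abs, Real.norm_eq_abs, Real.abs_exp, mul_left_comm, ← Real.exp_add]
  gcongr
  have := mul_le_mul_of_nonneg_left (le_of_lt ht) (sub_nonneg.2 hxy)
  linarith

end Laplace

section MacdonaldIntegral

/-- The weight `t^{ν-1} e^{-1/t}` whose Laplace transform at `y` is Sommerfeld's integral
`2 𝒦_ν(y) = ∫_0^∞ s^{-ν-1} e^{-s-y/s} ds`, written in the variable `t = 1/s`. -/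
noncomputable def sommerfeldWeight (ν t : ℝ) : ℝ := t ^ (ν - 1) * Real.exp (-t⁻¹)

theorem sommerfeldWeight_pos (ν : ℝ) {t : ℝ} (ht : 0 < t) : 0 < sommerfeldWeight ν t :=
  mul_pos (Real.rpow_pos_of_pos ht _) (Real.exp_pos _)

theorem measurable_sommerfeldWeight (ν : ℝ) : Measurable (sommerfeldWeight ν) := by
  unfold sommerfeldWeight
  fun_prop

theorem mul_sommerfeldWeight (ν : ℝ) {t : ℝ} (ht : 0 < t) :
    t * sommerfeldWeight ν t = sommerfeldWeight (ν + 1) t := by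
  rw [sommerfeldWeight, sommerfeldWeight, ← mul_assoc, Real.rpow_sub_one ht.ne',
    mul_div_cancel₀ _ ht.ne', add_sub_cancel_right]

theorem exp_neg_inv_le (m : ℕ) {t : ℝ} (ht : 0 < t) :
    Real.exp (-t⁻¹) ≤ m.factorial * t ^ m := by
  have h := Real.pow_div_factorial_le_exp t⁻¹ (inv_pos.2 ht).le m
  rw [inv_pow, div_eq_inv_mul, ← mul_inv] at h
  rw [Real.exp_neg]
  exact inv_le_of_inv_le₀ (by positivity) h

theorem laplaceIntegrable_sommerfeldWeight (ν : ℝ) :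
    LaplaceIntegrable 0 (sommerfeldWeight ν) := fun x hx => by
  obtain ⟨m, hm⟩ := exists_nat_gt (-ν)
  have hΓ : IntegrableOn (fun t : ℝ => t ^ (ν - 1 + m) * Real.exp (-(x * t))) (Ioi 0) := by
    simpa only [Real.rpow_one, neg_mul] using
      integrableOn_rpow_mul_exp_neg_mul_rpow (s := ν - 1 + m) (by linarith) one_pos hx
  refine (hΓ.const_mul (m.factorial : ℝ)).mono'
    ((measurable_sommerfeldWeight ν).mul (by fun_prop)).aestronglyMeasurable ?_
  filter_upwards [ae_restrict_mem measurableSet_Ioi] with t (ht : 0 < t)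
  have hle := mul_le_mul_of_nonneg_left (exp_neg_inv_le m ht) (Real.rpow_nonneg ht.le (ν - 1))
  rw [Real.norm_of_nonneg (mul_pos (sommerfeldWeight_pos ν ht) (Real.exp_pos _)).le,
    ← mul_assoc, Real.rpow_add_natCast ht.ne', mul_left_comm]
  exact mul_le_mul_of_nonneg_right hle (Real.exp_pos _).le

/-- Sommerfeld's integral for `2 𝒦_ν(y)`. -/
noncomputable def sommerfeldIntegral (ν : ℝ) : ℝ → ℝ := laplaceIoi 0 (sommerfeldWeight ν)

theorem sommerfeldIntegral_pos (ν : ℝ) {y : ℝ} (hy : 0 < y) : 0 < sommerfeldIntegral ν y :=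
  (laplaceIntegrable_sommerfeldWeight ν).laplaceIoi_pos (fun _ => sommerfeldWeight_pos ν) hy

theorem hasDerivAt_sommerfeldIntegral (ν : ℝ) {y : ℝ} (hy : 0 < y) :
    HasDerivAt (sommerfeldIntegral ν) (-sommerfeldIntegral (ν + 1) y) y := by
  have h : laplaceIoi 0 (fun t => t * sommerfeldWeight ν t) y = sommerfeldIntegral (ν + 1) y :=
    setIntegral_congr_fun measurableSet_Ioi fun t ht => by
      simp only [mul_sommerfeldWeight ν ht]
  exact h ▸ (laplaceIntegrable_sommerfeldWeight ν).hasDerivAt le_rfl hy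

theorem integral_comp_inv_Ioi (g : ℝ → ℝ) :
    ∫ t in Ioi 0, t ^ (-2 : ℝ) * g t⁻¹ = ∫ s in Ioi 0, g s := by
  have h := integral_comp_rpow_Ioi g (p := -1) (by norm_num)
  rw [show (-1 - 1 : ℝ) = -2 by norm_num] at h
  simpa only [abs_neg, abs_one, one_mul, smul_eq_mul, Real.rpow_neg_one] using h

theorem sommerfeldIntegral_neg (ν : ℝ) {y : ℝ} (hy : 0 < y) :
    sommerfeldIntegral (-ν) y = y ^ ν * sommerfeldIntegral ν y := by
  have hscale := integral_comp_mul_left_Ioi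
    (fun s => s ^ (ν - 1) * Real.exp (-(s + y * s⁻¹))) 0 hy
  rw [mul_zero, smul_eq_mul] at hscale
  calc sommerfeldIntegral (-ν) y
      = ∫ s in Ioi 0, s ^ (ν - 1) * Real.exp (-(s + y * s⁻¹)) := by
        rw [sommerfeldIntegral, laplaceIoi, ← integral_comp_inv_Ioi]
        refine setIntegral_congr_fun measurableSet_Ioi fun s (hs : 0 < s) => ?_
        simp only [sommerfeldWeight, inv_inv, Real.inv_rpow hs.le, ← Real.rpow_neg hs.le]
        rw [mul_assoc, ← Real.exp_add, ← mul_assoc, ← Real.rpow_add hs]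
        ring_nf
    _ = y * ∫ t in Ioi 0, (y * t) ^ (ν - 1) * Real.exp (-(y * t + y * (y * t)⁻¹)) := by
        rw [hscale, mul_inv_cancel_left₀ hy.ne']
    _ = y ^ ν * sommerfeldIntegral ν y := by
        rw [sommerfeldIntegral, laplaceIoi, ← integral_const_mul, ← integral_const_mul]
        refine setIntegral_congr_fun measurableSet_Ioi fun t (ht : 0 < t) => ?_
        rw [sommerfeldWeight, Real.mul_rpow hy.le ht.le, mul_inv, mul_inv_cancel_left₀ hy.ne',
          neg_add, Real.exp_add, Real.rpow_sub_one hy.ne']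
        field_simp

theorem integral_sommerfeldWeight {ν : ℝ} (hν : ν < 0) :
    ∫ t in Ioi 0, sommerfeldWeight ν t = Real.Gamma (-ν) := by
  rw [Real.Gamma_eq_integral (neg_pos.2 hν), ← integral_comp_inv_Ioi]
  refine setIntegral_congr_fun measurableSet_Ioi fun t (ht : 0 < t) => ?_
  simp only [sommerfeldWeight, inv_inv, Real.inv_rpow ht.le, ← Real.rpow_neg ht.le]
  rw [← mul_assoc, ← Real.rpow_add ht, mul_comm]
  ring_nf

theorem integrableOn_sommerfeldWeight {ν : ℝ} (hν : ν < 0) :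
    IntegrableOn (sommerfeldWeight ν) (Ioi 0) := by
  by_contra h
  exact (Real.Gamma_pos_of_pos (neg_pos.2 hν)).ne'
    (integral_sommerfeldWeight hν ▸ integral_undef h)

theorem tendsto_sommerfeldIntegral_zero {ν : ℝ} (hν : ν < 0) :
    Tendsto (sommerfeldIntegral ν) (𝓝[>] 0) (𝓝 (Real.Gamma (-ν))) := by
  rw [← integral_sommerfeldWeight hν]
  refine tendsto_integral_filter_of_dominated_convergence (sommerfeldWeight ν)
    (eventually_of_mem self_mem_nhdsWithin fun y hy =>
      (laplaceIntegrable_sommerfeldWeight ν hy).aestronglyMeasurable) ?_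
    (integrableOn_sommerfeldWeight hν) (Eventually.of_forall fun t => ?_)
  · filter_upwards [self_mem_nhdsWithin] with y (hy : 0 < y)
    filter_upwards [ae_restrict_mem measurableSet_Ioi] with t (ht : 0 < t)
    have hpos := sommerfeldWeight_pos ν ht
    rw [Real.norm_of_nonneg (mul_pos hpos (Real.exp_pos _)).le]
    exact mul_le_of_le_one_right hpos.le (Real.exp_le_one_iff.2 (by nlinarith))
  · have h : Continuous fun y : ℝ => sommerfeldWeight ν t * Real.exp (-(y * t)) := by fun_prop
    simpa using (h.tendsto 0).mono_left nhdsWithin_le_nhds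

end MacdonaldIntegral

section Wronskian

theorem exists_const_of_hasDerivAt_zero {E : Type*} [NormedAddCommGroup E] [NormedSpace ℝ E]
    {a : ℝ} {f : ℝ → E} (hf : ∀ x > a, HasDerivAt f 0 x) : ∃ c, ∀ x > a, f x = c :=
  isOpen_Ioi.exists_is_const_of_deriv_eq_zero isPreconnected_Ioi
    (fun x hx => (hf x hx).differentiableAt.differentiableWithinAt) fun x hx => (hf x hx).deriv

variable {𝕜 : Type*} [RCLike 𝕜]

/-- The Wronskian `p Q - q P` is constant, hence zero, and `(p / P)'` is a multiple
of it. -/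
theorem exists_eq_const_mul_of_tendsto_wronskian {a : ℝ} {α β p q P Q : ℝ → 𝕜}
    {l : Filter ℝ} [l.NeBot]
    (hp : ∀ x > a, HasDerivAt p (-(α x * q x)) x) (hq : ∀ x > a, HasDerivAt q (-(β x * p x)) x)
    (hP : ∀ x > a, HasDerivAt P (-(α x * Q x)) x) (hQ : ∀ x > a, HasDerivAt Q (-(β x * P x)) x)
    (hP0 : ∀ x > a, P x ≠ 0) (hl : ∀ᶠ x in l, a < x)
    (hlim : Tendsto (fun x => p x * Q x - q x * P x) l (𝓝 0)) :
    ∃ c : 𝕜, ∀ x > a, p x = c * P x := by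
  obtain ⟨W, hW⟩ : ∃ W, ∀ x > a, p x * Q x - q x * P x = W :=
    exists_const_of_hasDerivAt_zero fun x hx => by
      convert! ((hp x hx).mul (hQ x hx)).sub ((hq x hx).mul (hP x hx)) using 1
      ring
  have hWlim : Tendsto (fun x => p x * Q x - q x * P x) l (𝓝 W) :=
    tendsto_const_nhds.congr' (hl.mono fun x hx => (hW x hx).symm)
  have hW0 : W = 0 := tendsto_nhds_unique hWlim hlim
  obtain ⟨c, hc⟩ : ∃ c, ∀ x > a, p x / P x = c :=
    exists_const_of_hasDerivAt_zero fun x hx => by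
      convert! (hp x hx).div (hP x hx) (hP0 x hx) using 1
      rw [eq_comm, div_eq_zero_iff]
      exact Or.inl (by linear_combination α x * (hW x hx).trans hW0)
  exact ⟨c, fun x hx => (div_eq_iff (hP0 x hx)).1 (hc x hx)⟩

end Wronskian

section MacdonaldFamily

variable {𝕜 : Type*} [RCLike 𝕜]

/-- A family of functions on `(0, ∞)`, indexed by the order, satisfying the differentiation rule
and the reflection rule of `𝒦_ν`; together they amount to the second-order Bessel equation. -/
structure IsMacdonaldFamily (X : ℝ → ℝ → 𝕜) : Prop where
  hasDerivAt : ∀ ν, ∀ y > 0, HasDerivAt (X ν) (-X (ν + 1) y) y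
  neg : ∀ ν, ∀ y > 0, X (-ν) y = ((y ^ ν : ℝ) : 𝕜) * X ν y

theorem IsMacdonaldFamily.sub {X Y : ℝ → ℝ → 𝕜} (hX : IsMacdonaldFamily X)
    (hY : IsMacdonaldFamily Y) : IsMacdonaldFamily (X - Y) where
  hasDerivAt ν y hy := by
    convert! (hX.hasDerivAt ν y hy).sub (hY.hasDerivAt ν y hy) using 1
    simp only [Pi.sub_apply]
    ring
  neg ν y hy := by simp only [Pi.sub_apply, hX.neg ν y hy, hY.neg ν y hy, mul_sub]

theorem IsMacdonaldFamily.hasDerivAt_left {X : ℝ → ℝ → 𝕜} (hX : IsMacdonaldFamily X) (ν : ℝ)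
    {y : ℝ} (hy : 0 < y) :
    HasDerivAt (X ν) (-(((y ^ (-(ν + 1)) : ℝ) : 𝕜) * X (-(ν + 1)) y)) y := by
  have h := hX.neg (-(ν + 1)) y hy
  rw [neg_neg] at h
  exact h ▸ hX.hasDerivAt ν y hy

theorem IsMacdonaldFamily.hasDerivAt_right {X : ℝ → ℝ → 𝕜} (hX : IsMacdonaldFamily X) (ν : ℝ)
    {y : ℝ} (hy : 0 < y) :
    HasDerivAt (X (-(ν + 1))) (-(((y ^ ν : ℝ) : 𝕜) * X ν y)) y := by
  rw [← hX.neg ν y hy, show -ν = -(ν + 1) + 1 by ring]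
  exact hX.hasDerivAt _ y hy

theorem isMacdonaldFamily_sommerfeldIntegral : IsMacdonaldFamily sommerfeldIntegral where
  hasDerivAt ν _ hy := hasDerivAt_sommerfeldIntegral ν hy
  neg ν _ hy := sommerfeldIntegral_neg ν hy

theorem isMacdonaldFamily_ofReal_sommerfeldIntegral :
    IsMacdonaldFamily fun ν y => (sommerfeldIntegral ν y : ℂ) where
  hasDerivAt ν _ hy := by simpa using (hasDerivAt_sommerfeldIntegral ν hy).ofReal_comp
  neg ν _ hy := by rw [sommerfeldIntegral_neg ν hy, ofReal_mul]; rfl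

theorem isMacdonaldFamily_two_mul_besselCliffordK :
    IsMacdonaldFamily fun ν y => 2 * besselCliffordK ν y where
  hasDerivAt ν y hy := by
    have h := ((hasDerivAt_besselCliffordK ν (ofReal_mem_slitPlane.2 hy)).comp_ofReal).const_mul 2
    rwa [mul_neg, ← ofReal_one, ← ofReal_add] at h
  neg ν y hy := by
    rw [ofReal_neg, besselCliffordK_neg _ (ofReal_ne_zero.2 hy.ne'), ← ofReal_cpow hy.le,
      mul_left_comm]
    rfl

theorem tendsto_sommerfeldIntegral_sub_besselCliffordK {ν : ℝ} (hν : ∀ n : ℤ, ν ≠ n)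
    (hneg : ν < 0) :
    Tendsto (fun y : ℝ => (sommerfeldIntegral ν y : ℂ) - 2 * besselCliffordK ν y) (𝓝[>] 0)
      (𝓝 0) := by
  have hJ := (continuous_ofReal.tendsto _).comp (tendsto_sommerfeldIntegral_zero hneg)
  have hK := (tendsto_besselCliffordK_zero hν hneg).const_mul 2
  rw [← Gamma_ofReal, ofReal_neg] at hJ
  rw [mul_div_cancel₀ _ two_ne_zero] at hK
  simpa using! hJ.sub hK

theorem sommerfeldIntegral_eq_besselCliffordK_of_neg {ν : ℝ} (hlow : -1 < ν) (hneg : ν < 0) {y : ℝ}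
    (hy : 0 < y) : (sommerfeldIntegral ν y : ℂ) = 2 * besselCliffordK ν y := by
  have hν : ∀ n : ℤ, ν ≠ n := fun n h => by
    have h1 : -1 < n := by exact_mod_cast h ▸ hlow
    have h2 : n < 0 := by exact_mod_cast h ▸ hneg
    omega
  have hν' : ∀ n : ℤ, -(ν + 1) ≠ n := fun n h => hν (-n - 1) (by push_cast; linarith)
  have hJ := isMacdonaldFamily_ofReal_sommerfeldIntegral
  have hD := hJ.sub isMacdonaldFamily_two_mul_besselCliffordK
  have hJlim : ∀ {μ : ℝ}, μ < 0 →
      Tendsto (fun y => (sommerfeldIntegral μ y : ℂ)) (𝓝[>] 0) (𝓝 (Real.Gamma (-μ))) :=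
    fun hμ => (continuous_ofReal.tendsto _).comp (tendsto_sommerfeldIntegral_zero hμ)
  have hDlim := tendsto_sommerfeldIntegral_sub_besselCliffordK hν hneg
  have hDlim' := tendsto_sommerfeldIntegral_sub_besselCliffordK hν' (by linarith)
  have hpos : ∀ᶠ y : ℝ in 𝓝[>] 0, 0 < y := self_mem_nhdsWithin
  obtain ⟨c, hc⟩ := exists_eq_const_mul_of_tendsto_wronskian (l := 𝓝[>] (0 : ℝ))
    (fun x hx => hD.hasDerivAt_left ν hx) (fun x hx => hD.hasDerivAt_right ν hx)
    (fun x hx => hJ.hasDerivAt_left ν hx) (fun x hx => hJ.hasDerivAt_right ν hx)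
    (fun x hx => ofReal_ne_zero.2 (sommerfeldIntegral_pos ν hx).ne') hpos
    (by simpa using! (hDlim.mul (hJlim (by linarith))).sub (hDlim'.mul (hJlim hneg)))
  have hc0 : c = 0 := by
    have h := tendsto_nhds_unique (hDlim.congr' (hpos.mono hc)) ((hJlim hneg).const_mul c)
    have hΓ := (Real.Gamma_pos_of_pos (neg_pos.2 hneg)).ne'
    simpa [hΓ] using h.symm
  simpa [hc0, sub_eq_zero] using hc y hy

theorem sommerfeldIntegral_add_one_eq_besselCliffordK {ν : ℝ}
    (h : ∀ y : ℝ, 0 < y → (sommerfeldIntegral ν y : ℂ) = 2 * besselCliffordK ν y) {y : ℝ}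
    (hy : 0 < y) :
    (sommerfeldIntegral (ν + 1) y : ℂ) = 2 * besselCliffordK (ν + 1 : ℝ) y := by
  have hJ := isMacdonaldFamily_ofReal_sommerfeldIntegral.hasDerivAt ν y hy
  have hK := isMacdonaldFamily_two_mul_besselCliffordK.hasDerivAt ν y hy
  exact neg_injective (hJ.unique (hK.congr_of_eventuallyEq
    (eventually_of_mem (Ioi_mem_nhds hy) h)))

theorem sommerfeldIntegral_eq_besselCliffordK_of_neg_one_lt {ν : ℝ} (hν : ∀ n : ℤ, ν ≠ n)
    (hlow : -1 < ν) {y : ℝ} (hy : 0 < y) :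
    (sommerfeldIntegral ν y : ℂ) = 2 * besselCliffordK ν y := by
  obtain ⟨k, hk⟩ := exists_nat_gt ν
  induction k generalizing ν y with
  | zero => exact sommerfeldIntegral_eq_besselCliffordK_of_neg hlow (by simpa using hk) hy
  | succ k ih =>
    push_cast at hk
    rcases lt_or_ge ν 0 with hneg | hnonneg
    · exact sommerfeldIntegral_eq_besselCliffordK_of_neg hlow hneg hy
    · have hpos : 0 < ν := hnonneg.lt_of_ne fun h => hν 0 (by simp [← h])
      have hν' : ∀ n : ℤ, ν - 1 ≠ n := fun n h => hν (n + 1) (by push_cast; linarith)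
      have h := sommerfeldIntegral_add_one_eq_besselCliffordK
        (fun y hy => ih hν' (by linarith) hy (by linarith)) hy
      rwa [sub_add_cancel] at h

theorem sommerfeldIntegral_eq_besselCliffordK {ν : ℝ} (hν : ∀ n : ℤ, ν ≠ n) {y : ℝ} (hy : 0 < y) :
    (sommerfeldIntegral ν y : ℂ) = 2 * besselCliffordK ν y := by
  rcases lt_or_ge (-1) ν with hlow | hlow
  · exact sommerfeldIntegral_eq_besselCliffordK_of_neg_one_lt hν hlow hy
  · have hν' : ∀ n : ℤ, -ν ≠ n := fun n h => hν (-n) (by push_cast; linarith)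
    have h := sommerfeldIntegral_eq_besselCliffordK_of_neg_one_lt hν' (by linarith) hy
    rw [← neg_neg ν, isMacdonaldFamily_ofReal_sommerfeldIntegral.neg _ y hy,
      isMacdonaldFamily_two_mul_besselCliffordK.neg _ y hy, h]

end MacdonaldFamily

section Schlafli

/-- The weight `(t ^ 2 - 1) ^ μ`, whose Laplace transform over `(1, ∞)` is, up to a power of `x`,
Schläfli's integral for the Macdonald function of order `μ + 1 / 2`. -/
noncomputable def schlafliWeight (μ t : ℝ) : ℝ := (t ^ 2 - 1) ^ μ

theorem schlafliWeight_pos (μ : ℝ) {t : ℝ} (ht : 1 < t) : 0 < schlafliWeight μ t :=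
  Real.rpow_pos_of_pos (by nlinarith) μ

theorem sq_mul_schlafliWeight (μ : ℝ) {t : ℝ} (ht : 1 < t) :
    t * (t * schlafliWeight μ t) = schlafliWeight μ t + schlafliWeight (μ + 1) t := by
  have h : t ^ 2 - 1 ≠ 0 := by nlinarith
  rw [schlafliWeight, schlafliWeight, Real.rpow_add_one h]
  ring

theorem laplaceIntegrable_schlafliWeight {μ : ℝ} (hμ : 0 ≤ μ) :
    LaplaceIntegrable 1 (schlafliWeight μ) := fun x hx => by
  have hΓ : IntegrableOn (fun t : ℝ => t ^ (2 * μ) * Real.exp (-(x * t))) (Ioi 1) := by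
    have h := integrableOn_rpow_mul_exp_neg_mul_rpow (s := 2 * μ) (by linarith) one_pos hx
    simp only [Real.rpow_one, neg_mul] at h
    exact h.mono_set (Ioi_subset_Ioi zero_le_one)
  have hmeas : Measurable fun t => schlafliWeight μ t * Real.exp (-(x * t)) := by
    unfold schlafliWeight
    fun_prop
  refine hΓ.mono' hmeas.aestronglyMeasurable ?_
  filter_upwards [ae_restrict_mem measurableSet_Ioi] with t (ht : 1 < t)
  rw [Real.norm_of_nonneg (mul_pos (schlafliWeight_pos μ ht) (Real.exp_pos _)).le,
    Real.rpow_mul (by linarith), Real.rpow_two]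
  exact mul_le_mul_of_nonneg_right
    (Real.rpow_le_rpow (by nlinarith) (sub_le_self _ zero_le_one) hμ) (Real.exp_pos _).le

theorem laplaceIoi_sq_mul_schlafliWeight {μ : ℝ} (hμ : 0 ≤ μ) {x : ℝ} (hx : 0 < x) :
    laplaceIoi 1 (fun t => t * (t * schlafliWeight μ t)) x =
      laplaceIoi 1 (schlafliWeight μ) x + laplaceIoi 1 (schlafliWeight (μ + 1)) x := by
  rw [laplaceIoi, laplaceIoi, laplaceIoi, ← integral_add (laplaceIntegrable_schlafliWeight hμ hx)
    (laplaceIntegrable_schlafliWeight (by linarith) hx)]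
  exact setIntegral_congr_fun measurableSet_Ioi fun t ht => by
    simp only [sq_mul_schlafliWeight μ ht, add_mul]

theorem mul_laplaceIoi_schlafliWeight_add_one {μ : ℝ} (hμ : 0 ≤ μ) {x : ℝ} (hx : 0 < x) :
    x * laplaceIoi 1 (schlafliWeight (μ + 1)) x =
      2 * (μ + 1) * laplaceIoi 1 (fun t => t * schlafliWeight μ t) x := by
  set F : ℝ → ℝ := fun t => schlafliWeight (μ + 1) t * Real.exp (-(x * t)) with hF
  set F' : ℝ → ℝ := fun t => 2 * (μ + 1) * (t * schlafliWeight μ t * Real.exp (-(x * t)))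
    - x * F t with hF'
  have hderiv : ∀ t ∈ Ici (1 : ℝ), HasDerivAt F (F' t) t := fun t _ => by
    have h := ((((hasDerivAt_id t).pow 2).sub_const 1).rpow_const
      (Or.inr (by linarith : 1 ≤ μ + 1))).mul (((hasDerivAt_id t).const_mul x).neg.exp)
    convert! h using 1
    simp only [hF', schlafliWeight, hF, Nat.cast_ofNat, id_eq, Nat.add_one_sub_one, pow_one,
      mul_one, Pi.pow_apply, add_sub_cancel_right, Pi.neg_apply, mul_neg]
    ring
  have hFint : IntegrableOn F (Ioi 1) := laplaceIntegrable_schlafliWeight (by linarith) hx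
  have hfirst := ((laplaceIntegrable_schlafliWeight hμ).id_mul zero_le_one hx).const_mul
    (2 * (μ + 1))
  have hF'int : IntegrableOn F' (Ioi 1) := hfirst.sub (hFint.const_mul x)
  have h := integral_Ioi_of_hasDerivAt_of_tendsto' hderiv hF'int
    (tendsto_zero_of_hasDerivAt_of_integrableOn_Ioi
      (fun t ht => hderiv t (mem_Ici_of_Ioi ht)) hF'int hFint)
  have hF1 : F 1 = 0 := by simp [hF, schlafliWeight, Real.zero_rpow (by linarith : μ + 1 ≠ 0)]
  rw [hF1, sub_zero, hF', integral_sub hfirst (hFint.const_mul x), integral_const_mul,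
    integral_const_mul] at h
  exact (sub_eq_zero.1 h).symm

end Schlafli

section SchlafliFormula

theorem LaplaceIntegrable.isBigO_exp_atTop {a : ℝ} {w : ℝ → ℝ} (hw : LaplaceIntegrable a w) :
    laplaceIoi a w =O[atTop] fun x => Real.exp (-(a * x)) := by
  refine IsBigO.of_bound (Real.exp a * laplaceIoi a (fun t => |w t|) 1) ?_
  filter_upwards [eventually_ge_atTop 1] with x hx
  refine (hw.abs_laplaceIoi_le one_pos hx).trans_eq ?_
  rw [Real.norm_of_nonneg (Real.exp_pos _).le, mul_right_comm, ← Real.exp_add]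
  ring_nf

theorem hasDerivAt_sommerfeldIntegral_sq_div_four (ν : ℝ) {x : ℝ} (hx : 0 < x) :
    HasDerivAt (fun x => sommerfeldIntegral ν (x ^ 2 / 4))
      (-((x / 2) ^ (-(2 * ν + 1)) * sommerfeldIntegral (-(ν + 1)) (x ^ 2 / 4))) x := by
  have hsq : HasDerivAt (fun x : ℝ => x ^ 2 / 4) (x / 2) x := by
    convert! (hasDerivAt_pow 2 x).div_const 4 using 1
    ring
  convert! (isMacdonaldFamily_sommerfeldIntegral.hasDerivAt_left ν
    (by positivity : 0 < x ^ 2 / 4)).comp x hsq using 1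
  have hpow : (x ^ 2 / 4) ^ (-(ν + 1)) * (x / 2) = (x / 2) ^ (-(2 * ν + 1)) := by
    rw [show x ^ 2 / 4 = (x / 2) ^ (2 : ℝ) by rw [Real.rpow_two]; ring,
      ← Real.rpow_mul (by positivity), ← Real.rpow_add_one (by positivity)]
    ring_nf
  simp only [RCLike.ofReal_real_eq_id, id]
  rw [← hpow]
  ring

theorem hasDerivAt_sommerfeldIntegral_neg_sq_div_four (ν : ℝ) {x : ℝ} (hx : 0 < x) :
    HasDerivAt (fun x => sommerfeldIntegral (-(ν + 1)) (x ^ 2 / 4))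
      (-((x / 2) ^ (2 * ν + 1) * sommerfeldIntegral ν (x ^ 2 / 4))) x := by
  have h := hasDerivAt_sommerfeldIntegral_sq_div_four (-(ν + 1)) hx
  rwa [show -(2 * -(ν + 1) + 1) = 2 * ν + 1 by ring, show -(-(ν + 1) + 1) = ν by ring] at h

theorem hasDerivAt_laplaceIoi_schlafliWeight {μ : ℝ} (hμ : 0 ≤ μ) {x : ℝ} (hx : 0 < x) :
    HasDerivAt (laplaceIoi 1 (schlafliWeight μ))
      (-((x / 2) ^ (-(2 * μ + 2)) *
        ((x / 2) ^ (2 * μ + 2) * laplaceIoi 1 (fun t => t * schlafliWeight μ t) x))) x := by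
  rw [← mul_assoc, ← Real.rpow_add (by positivity), neg_add_cancel, Real.rpow_zero, one_mul]
  exact (laplaceIntegrable_schlafliWeight hμ).hasDerivAt zero_le_one hx

theorem hasDerivAt_rpow_mul_laplaceIoi_schlafliWeight {μ : ℝ} (hμ : 0 ≤ μ) {x : ℝ} (hx : 0 < x) :
    HasDerivAt
      (fun x => (x / 2) ^ (2 * μ + 2) * laplaceIoi 1 (fun t => t * schlafliWeight μ t) x)
      (-((x / 2) ^ (2 * μ + 2) * laplaceIoi 1 (schlafliWeight μ) x)) x := by
  have hL := ((laplaceIntegrable_schlafliWeight hμ).id_mul zero_le_one).hasDerivAt zero_le_one hx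
  convert! ((((hasDerivAt_id x).div_const 2).rpow_const (p := 2 * μ + 2)
    (Or.inl (by simpa using hx.ne'))).mul hL) using 1
  have h := mul_laplaceIoi_schlafliWeight_add_one hμ hx
  rw [laplaceIoi_sq_mul_schlafliWeight hμ hx, id, Real.rpow_sub_one (by positivity)]
  field_simp
  linear_combination h

/-- The left side is bounded at infinity while the right one decays exponentially, so that their
Wronskian vanishes. -/
theorem exists_sommerfeldIntegral_eq_mul_laplaceIoi {ν : ℝ} (hν : 1 / 2 ≤ ν) :
    ∃ c : ℝ, ∀ x > 0, sommerfeldIntegral ν (x ^ 2 / 4) =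
      c * laplaceIoi 1 (schlafliWeight (ν - 1 / 2)) x := by
  have hμ : 0 ≤ ν - 1 / 2 := by linarith
  have hw := laplaceIntegrable_schlafliWeight hμ
  have he : 2 * (ν - 1 / 2) + 2 = 2 * ν + 1 := by ring
  have hP := fun (x : ℝ) (hx : 0 < x) => hasDerivAt_laplaceIoi_schlafliWeight hμ hx
  have hQ := fun (x : ℝ) (hx : 0 < x) => hasDerivAt_rpow_mul_laplaceIoi_schlafliWeight hμ hx
  simp only [he] at hP hQ
  refine exists_eq_const_mul_of_tendsto_wronskian (l := atTop)
    (fun x hx => hasDerivAt_sommerfeldIntegral_sq_div_four ν hx)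
    (fun x hx => hasDerivAt_sommerfeldIntegral_neg_sq_div_four ν hx) hP hQ
    (fun x hx => (hw.laplaceIoi_pos (fun _ => schlafliWeight_pos _) hx).ne')
    (eventually_gt_atTop 0) ?_
  have hsq : Tendsto (fun x : ℝ => x ^ 2 / 4) atTop atTop :=
    (tendsto_pow_atTop two_ne_zero).atTop_div_const four_pos
  have hJ : ∀ κ : ℝ, (fun x => sommerfeldIntegral κ (x ^ 2 / 4)) =O[atTop] fun _ => (1 : ℝ) :=
    fun κ => by
      simpa [Function.comp_def, sommerfeldIntegral] using
        (laplaceIntegrable_sommerfeldWeight κ).isBigO_exp_atTop.comp_tendsto hsq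
  have hexp : ∀ s : ℝ, Tendsto (fun x : ℝ => x ^ s * Real.exp (-(1 * x))) atTop (𝓝 0) := fun s => by
    simpa using tendsto_rpow_mul_exp_neg_mul_atTop_nhds_zero s 1 one_pos
  have hpow : (fun x : ℝ => (x / 2) ^ (2 * ν + 1)) =O[atTop] fun x => x ^ (2 * ν + 1) := by
    refine IsBigO.of_bound ((2⁻¹ : ℝ) ^ (2 * ν + 1)) ?_
    filter_upwards [eventually_ge_atTop 0] with x hx
    rw [div_eq_inv_mul, Real.mul_rpow (by norm_num) hx, norm_mul,
      Real.norm_of_nonneg (by positivity)]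
  have hpQ := (hJ ν).mul (hpow.mul (hw.id_mul zero_le_one).isBigO_exp_atTop)
  have hqP := (hJ (-(ν + 1))).mul hw.isBigO_exp_atTop
  simp only [one_mul] at hpQ hqP
  simpa using (hpQ.trans_tendsto (by simpa using hexp (2 * ν + 1))).sub
    (hqP.trans_tendsto (by simpa using hexp 0))

end SchlafliFormula

section Hankel

/-- Hankel's integral `∫_0^∞ e^{-s} s^μ (1 + us)^μ ds`; at `u = 1 / (2z)` it is the correction
factor in `K_{μ+1/2}(z) ∼ (π / (2z))^{1/2} e^{-z}`, normalised to tend to `Γ(μ + 1)`. -/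
noncomputable def hankelIntegral (μ : ℝ) (u : ℂ) : ℂ :=
  ∫ s in Ioi (0 : ℝ), ((Real.exp (-s) * s ^ μ : ℝ) : ℂ) * (1 + u * s) ^ (μ : ℂ)

theorem one_add_mul_rpow_le {m R s : ℝ} (hm : 0 ≤ m) (hR : 0 ≤ R) (hs : 0 < s) :
    (1 + R * s) ^ m ≤ (1 + R) ^ m * (1 + s ^ m) := by
  have hsm := Real.rpow_nonneg hs.le m
  rcases le_total s 1 with h | h
  · exact (Real.rpow_le_rpow (by positivity) (by nlinarith) hm).trans
      (le_mul_of_one_le_right (by positivity) (by linarith))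
  · calc (1 + R * s) ^ m ≤ ((1 + R) * s) ^ m :=
          Real.rpow_le_rpow (by positivity) (by nlinarith) hm
      _ = (1 + R) ^ m * s ^ m := Real.mul_rpow (by positivity) hs.le
      _ ≤ (1 + R) ^ m * (1 + s ^ m) := by gcongr; linarith

theorem integrableOn_exp_neg_mul_rpow_mul_one_add_mul_rpow {p m R : ℝ} (hp : -1 < p) (hm : 0 ≤ m)
    (hR : 0 ≤ R) :
    IntegrableOn (fun s => Real.exp (-s) * s ^ p * (1 + R * s) ^ m) (Ioi 0) := by
  have hΓ : ∀ q : ℝ, -1 < q → IntegrableOn (fun s => Real.exp (-s) * s ^ q) (Ioi 0) := by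
    intro q hq
    simpa using Real.GammaIntegral_convergent (by linarith : 0 < q + 1)
  have hmeas : Measurable fun s : ℝ => Real.exp (-s) * s ^ p * (1 + R * s) ^ m := by fun_prop
  refine (((hΓ p hp).add (hΓ (p + m) (by linarith))).const_mul ((1 + R) ^ m)).mono'
    hmeas.aestronglyMeasurable ?_
  filter_upwards [ae_restrict_mem measurableSet_Ioi] with s (hs : 0 < s)
  rw [Real.norm_of_nonneg (by positivity), Pi.add_apply, Real.rpow_add hs]
  calc Real.exp (-s) * s ^ p * (1 + R * s) ^ m
      ≤ Real.exp (-s) * s ^ p * ((1 + R) ^ m * (1 + s ^ m)) := by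
        gcongr
        exact one_add_mul_rpow_le hm hR hs
    _ = (1 + R) ^ m * (Real.exp (-s) * s ^ p + Real.exp (-s) * (s ^ p * s ^ m)) := by ring

theorem norm_one_add_mul_cpow_le {m R s : ℝ} (hm : 0 ≤ m) {u : ℂ} (hu : ‖u‖ ≤ R) (hs : 0 ≤ s) :
    ‖(1 + u * s) ^ (m : ℂ)‖ ≤ (1 + R * s) ^ m := by
  rw [norm_cpow_real]
  refine Real.rpow_le_rpow (norm_nonneg _) ((norm_add_le _ _).trans ?_) hm
  rw [norm_one, norm_mul, Complex.norm_of_nonneg hs]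
  gcongr

theorem norm_hankelIntegrand_le {μ R s : ℝ} (hμ : 0 ≤ μ) {u : ℂ} (hu : ‖u‖ ≤ R) (hs : 0 < s) :
    ‖((Real.exp (-s) * s ^ μ : ℝ) : ℂ) * (1 + u * s) ^ (μ : ℂ)‖ ≤
      Real.exp (-s) * s ^ μ * (1 + R * s) ^ μ := by
  rw [norm_mul, Complex.norm_of_nonneg (by positivity)]
  gcongr
  exact norm_one_add_mul_cpow_le hμ hu hs.le

theorem norm_deriv_hankelIntegrand_le {μ R s : ℝ} (hμ : 1 ≤ μ) {u : ℂ} (hu : ‖u‖ ≤ R) (hs : 0 < s) :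
    ‖((Real.exp (-s) * s ^ μ : ℝ) : ℂ) * (μ * (1 + u * s) ^ (μ - 1 : ℂ) * s)‖ ≤
      μ * (Real.exp (-s) * s ^ (μ + 1) * (1 + R * s) ^ (μ - 1)) := by
  have hμ0 : 0 ≤ μ := by linarith
  have hle := norm_one_add_mul_cpow_le (sub_nonneg.2 hμ) hu hs.le
  push_cast at hle
  rw [norm_mul, norm_mul, norm_mul, Complex.norm_of_nonneg (by positivity),
    Complex.norm_of_nonneg hμ0, Complex.norm_of_nonneg hs.le, Real.rpow_add_one hs.ne']
  calc Real.exp (-s) * s ^ μ * (μ * ‖(1 + u * s) ^ (μ - 1 : ℂ)‖ * s)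
      ≤ Real.exp (-s) * s ^ μ * (μ * (1 + R * s) ^ (μ - 1) * s) := by gcongr
    _ = μ * (Real.exp (-s) * (s ^ μ * s) * (1 + R * s) ^ (μ - 1)) := by ring

theorem aestronglyMeasurable_hankelIntegrand (μ : ℝ) (u : ℂ) :
    AEStronglyMeasurable
      (fun s : ℝ => ((Real.exp (-s) * s ^ μ : ℝ) : ℂ) * (1 + u * s) ^ (μ : ℂ))
      (volume.restrict (Ioi 0)) :=
  (by fun_prop : Measurable _).aestronglyMeasurable

theorem tendsto_hankelIntegral_zero {μ : ℝ} (hμ : 0 ≤ μ) :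
    Tendsto (hankelIntegral μ) (𝓝 0) (𝓝 (Real.Gamma (μ + 1))) := by
  have hΓ : (Real.Gamma (μ + 1) : ℂ) =
      ∫ s in Ioi (0 : ℝ), ((Real.exp (-s) * s ^ μ : ℝ) : ℂ) := by
    rw [Real.Gamma_eq_integral (by linarith), ← integral_complex_ofReal, add_sub_cancel_right]
  rw [hΓ]
  refine tendsto_integral_filter_of_dominated_convergence _
    (Eventually.of_forall (aestronglyMeasurable_hankelIntegrand μ)) ?_
    (integrableOn_exp_neg_mul_rpow_mul_one_add_mul_rpow (by linarith) hμ zero_le_one)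
    (Eventually.of_forall fun s => ?_)
  · filter_upwards [Metric.closedBall_mem_nhds (0 : ℂ) one_pos] with u hu
    filter_upwards [ae_restrict_mem measurableSet_Ioi] with s hs
    exact norm_hankelIntegrand_le hμ (mem_closedBall_zero_iff.1 hu) hs
  · have h : ContinuousAt
        (fun u : ℂ => ((Real.exp (-s) * s ^ μ : ℝ) : ℂ) * (1 + u * s) ^ (μ : ℂ)) 0 :=
      continuousAt_const.mul (ContinuousAt.cpow (by fun_prop) continuousAt_const (by simp))
    simpa using h.tendsto

theorem one_add_mul_mem_slitPlane {u : ℂ} (hu : u ∈ slitPlane) {s : ℝ} (hs : 0 < s) :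
    1 + u * s ∈ slitPlane := by
  rcases hu with hre | him
  · exact Or.inl (by simpa using by positivity)
  · exact Or.inr (by simpa using ⟨him, hs.ne'⟩)

theorem differentiableOn_hankelIntegral {μ : ℝ} (hμ : 1 ≤ μ) :
    DifferentiableOn ℂ (hankelIntegral μ) slitPlane := fun u₀ hu₀ => by
  have hnhds : slitPlane ∩ Metric.ball 0 (‖u₀‖ + 1) ∈ 𝓝 u₀ :=
    inter_mem (isOpen_slitPlane.mem_nhds hu₀) (Metric.isOpen_ball.mem_nhds (by simp))
  have hμ0 : 0 ≤ μ := by linarith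
  have h := hasDerivAt_integral_of_dominated_loc_of_deriv_le
    (μ := volume.restrict (Ioi (0 : ℝ)))
    (F := fun (u : ℂ) s => ((Real.exp (-s) * s ^ μ : ℝ) : ℂ) * (1 + u * s) ^ (μ : ℂ))
    (F' := fun (u : ℂ) s =>
      ((Real.exp (-s) * s ^ μ : ℝ) : ℂ) * (μ * (1 + u * s) ^ (μ - 1 : ℂ) * s))
    (bound := fun s =>
      μ * (Real.exp (-s) * s ^ (μ + 1) * (1 + (‖u₀‖ + 1) * s) ^ (μ - 1)))
    hnhds (Eventually.of_forall (aestronglyMeasurable_hankelIntegrand μ)) ?_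
    (by fun_prop : Measurable _).aestronglyMeasurable ?_
    ((integrableOn_exp_neg_mul_rpow_mul_one_add_mul_rpow (by linarith) (by linarith)
      (by positivity)).const_mul μ) ?_
  · exact h.2.differentiableAt.differentiableWithinAt
  · refine (integrableOn_exp_neg_mul_rpow_mul_one_add_mul_rpow (by linarith) hμ0
      (norm_nonneg u₀)).mono' (aestronglyMeasurable_hankelIntegrand μ u₀) ?_
    filter_upwards [ae_restrict_mem measurableSet_Ioi] with s hs
    exact norm_hankelIntegrand_le hμ0 le_rfl hs
  · filter_upwards [ae_restrict_mem measurableSet_Ioi] with s hs u hu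
    exact norm_deriv_hankelIntegrand_le hμ (mem_ball_zero_iff.1 hu.2).le hs
  · filter_upwards [ae_restrict_mem measurableSet_Ioi] with s hs u hu
    have hlin : HasDerivAt (fun u : ℂ => 1 + u * s) s u := by
      simpa using ((hasDerivAt_id u).mul_const (s : ℂ)).const_add 1
    exact (hlin.cpow_const (one_add_mul_mem_slitPlane hu.1 hs)).const_mul _

theorem integral_comp_add_right_Ioi {E : Type*} [NormedAddCommGroup E] [NormedSpace ℝ E]
    (f : ℝ → E) (a b : ℝ) : ∫ t in Ioi a, f (t + b) = ∫ t in Ioi (a + b), f t := by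
  have h := (measurePreserving_add_right volume b).setIntegral_preimage_emb
    (measurableEmbedding_addRight b) f (Ioi (a + b))
  rwa [preimage_add_const_Ioi, add_sub_cancel_right] at h

theorem laplaceIoi_schlafliWeight_eq_mul_hankelIntegral (μ : ℝ) {x : ℝ} (hx : 0 < x) :
    (laplaceIoi 1 (schlafliWeight μ) x : ℂ) =
      ((2 ^ μ * x ^ (-(μ + 1)) * Real.exp (-x) : ℝ) : ℂ) * hankelIntegral μ (2 * x)⁻¹ := by
  have hreal : hankelIntegral μ (2 * x)⁻¹ =
      (∫ s in Ioi (0 : ℝ), Real.exp (-s) * s ^ μ * (1 + (2 * x)⁻¹ * s) ^ μ : ℝ) := by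
    rw [hankelIntegral, ← integral_complex_ofReal]
    refine setIntegral_congr_fun measurableSet_Ioi fun s (hs : 0 < s) => ?_
    rw [ofReal_mul _ ((1 + (2 * x)⁻¹ * s) ^ μ), ofReal_cpow (by positivity)]
    push_cast
    rfl
  have hscale := integral_comp_mul_left_Ioi
    (fun s => Real.exp (-s) * s ^ μ * (1 + (2 * x)⁻¹ * s) ^ μ) 0 hx
  have hshift := integral_comp_add_right_Ioi
    (fun t => schlafliWeight μ t * Real.exp (-(x * t))) 0 1
  rw [mul_zero, smul_eq_mul, eq_inv_mul_iff_mul_eq₀ hx.ne'] at hscale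
  rw [zero_add] at hshift
  rw [hreal, ← ofReal_mul, ← hscale, laplaceIoi, ← hshift, ← integral_const_mul,
    ← integral_const_mul]
  congr 1
  refine setIntegral_congr_fun measurableSet_Ioi fun s (hs : 0 < s) => ?_
  have hsq : (s + 1) ^ 2 - 1 = 2 * (s * (1 + (2 * x)⁻¹ * (x * s))) := by
    field_simp
    ring
  rw [schlafliWeight, hsq,
    Real.mul_rpow (by norm_num) (by positivity), Real.mul_rpow hs.le (by positivity),
    Real.mul_rpow hx.le hs.le, Real.rpow_neg hx.le, Real.rpow_add_one hx.ne',
    show -(x * (s + 1)) = -x + -(x * s) by ring, Real.exp_add]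
  field_simp

end Hankel

section Asymptotics

theorem isPreconnected_slitPlane : IsPreconnected slitPlane :=
  (starConvex_one_slitPlane.isPathConnected one_mem_slitPlane).isConnected.isPreconnected

theorem eqOn_slitPlane_of_eq_ofReal {E : Type*} [NormedAddCommGroup E] [NormedSpace ℂ E]
    [CompleteSpace E] {f g : ℂ → E} (hf : DifferentiableOn ℂ f slitPlane)
    (hg : DifferentiableOn ℂ g slitPlane) (hfg : ∀ x : ℝ, 0 < x → f x = g x) :
    EqOn f g slitPlane := by
  refine (hf.analyticOnNhd isOpen_slitPlane).eqOn_of_preconnected_of_frequently_eq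
    (hg.analyticOnNhd isOpen_slitPlane) isPreconnected_slitPlane one_mem_slitPlane ?_
  have hlim : Tendsto ofReal (𝓝[≠] 1) (𝓝[≠] 1) :=
    continuous_ofReal.continuousWithinAt.tendsto_nhdsWithin fun x hx => by simpa using! hx
  refine hlim.frequently (Eventually.frequently ?_)
  exact nhdsWithin_le_nhds (eventually_of_mem (Ioi_mem_nhds one_pos) hfg)

theorem inv_mem_slitPlane {z : ℂ} (hz : z ∈ slitPlane) : z⁻¹ ∈ slitPlane := by
  have hpos := normSq_pos.2 (slitPlane_ne_zero hz)
  rcases hz with hre | him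
  · exact Or.inl (by rw [inv_re]; positivity)
  · exact Or.inr (by rw [inv_im]; exact div_ne_zero (neg_ne_zero.2 him) hpos.ne')

theorem exists_macdonaldK_ofReal_eq_mul_hankelIntegral {ν : ℝ} (hν : ∀ n : ℤ, ν ≠ n)
    (hν2 : 1 / 2 ≤ ν) :
    ∃ c : ℂ, c ≠ 0 ∧ ∀ x : ℝ, 0 < x →
      exp x * (x : ℂ) ^ (1 / 2 : ℂ) * macdonaldK ν x =
        c * hankelIntegral (ν - 1 / 2) (2 * x)⁻¹ := by
  obtain ⟨c, hc⟩ := exists_sommerfeldIntegral_eq_mul_laplaceIoi hν2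
  have hc0 : c ≠ 0 := fun h => (sommerfeldIntegral_pos ν (by norm_num : (0 : ℝ) < 1 ^ 2 / 4)).ne'
    (by rw [hc 1 one_pos, h, zero_mul])
  have hνℂ : ∀ n : ℤ, (ν : ℂ) ≠ n := by exact_mod_cast hν
  refine ⟨(2 ^ (-ν) * (c / 2) * 2 ^ (ν - 1 / 2) : ℝ),
    ofReal_ne_zero.2 (by positivity), fun x hx => ?_⟩
  have hK : 2 * besselCliffordK ν ((x ^ 2 / 4 : ℝ) : ℂ) = _ :=
    (sommerfeldIntegral_eq_besselCliffordK hν (by positivity)).symm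
  rw [hc x hx, ofReal_mul, laplaceIoi_schlafliWeight_eq_mul_hankelIntegral _ hx] at hK
  have hpow : Real.exp x * x ^ (1 / 2 : ℝ) * (x / 2) ^ ν * (x ^ (-(ν - 1 / 2 + 1)) * Real.exp (-x))
      = 2 ^ (-ν) := by
    rw [Real.div_rpow hx.le zero_le_two, Real.rpow_neg zero_le_two, Real.exp_neg,
      show -(ν - 1 / 2 + 1) = -(1 / 2) - ν by ring, Real.rpow_sub hx, Real.rpow_neg hx.le]
    field_simp
  have hexp : exp (x : ℂ) * (x : ℂ) ^ (1 / 2 : ℂ) * (x / 2 : ℂ) ^ (ν : ℂ) =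
      (Real.exp x * x ^ (1 / 2 : ℝ) * (x / 2) ^ ν : ℝ) := by
    rw [ofReal_mul, ofReal_mul, ofReal_cpow hx.le, ofReal_cpow (by positivity)]
    push_cast
    rfl
  rw [macdonaldK_eq_besselCliffordK hνℂ hx, ← mul_assoc, hexp, ← hpow]
  push_cast at hK ⊢
  linear_combination (exp (x : ℂ) * ((x ^ (1 / 2 : ℝ) : ℝ) : ℂ) * (((x / 2) ^ ν : ℝ) : ℂ)) / 2 * hK

theorem exists_macdonaldK_eq_mul_hankelIntegral {ν : ℝ} (hν : ∀ n : ℤ, ν ≠ n)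
    (hν2 : 3 / 2 ≤ ν) :
    ∃ c : ℂ, c ≠ 0 ∧ ∀ z ∈ slitPlane,
      exp z * z ^ (1 / 2 : ℂ) * macdonaldK ν z = c * hankelIntegral (ν - 1 / 2) (2 * z)⁻¹ := by
  obtain ⟨c, hc0, hc⟩ := exists_macdonaldK_ofReal_eq_mul_hankelIntegral hν (by linarith)
  have hνℂ : ∀ n : ℤ, (ν : ℂ) ≠ n := by exact_mod_cast hν
  have hinv : MapsTo (fun z : ℂ => (2 * z)⁻¹) slitPlane slitPlane := fun z hz =>
    inv_mem_slitPlane (by simpa [mem_slitPlane_iff] using hz)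
  refine ⟨c, hc0, eqOn_slitPlane_of_eq_ofReal ?_ ?_ hc⟩
  · refine DifferentiableOn.mul (fun z hz => ?_) (differentiableOn_macdonaldK hνℂ)
    exact (differentiableAt_exp.mul
      (differentiableAt_id.cpow_const hz)).differentiableWithinAt
  · refine DifferentiableOn.const_mul ((differentiableOn_hankelIntegral (by linarith)).comp
      (fun z hz => ?_) hinv) c
    exact (DifferentiableAt.inv (by fun_prop)
      (mul_ne_zero two_ne_zero (slitPlane_ne_zero hz))).differentiableWithinAt

theorem exists_tendsto_exp_mul_macdonaldK_of_le {ν : ℝ} (hν : ∀ n : ℤ, ν ≠ n) (hν2 : 3 / 2 ≤ ν) :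
    ∃ c ≠ 0, Tendsto (fun z : ℂ => exp z * z ^ (1 / 2 : ℂ) * macdonaldK ν z)
      (cobounded ℂ ⊓ 𝓟 slitPlane) (𝓝 c) := by
  obtain ⟨c, hc0, hc⟩ := exists_macdonaldK_eq_mul_hankelIntegral hν hν2
  have hΓ : (Real.Gamma (ν - 1 / 2 + 1) : ℂ) ≠ 0 :=
    ofReal_ne_zero.2 (Real.Gamma_pos_of_pos (by linarith)).ne'
  have hinv : Tendsto (fun z : ℂ => (2 * z)⁻¹) (cobounded ℂ ⊓ 𝓟 slitPlane) (𝓝 0) := by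
    simpa [mul_inv] using ((tendsto_inv₀_cobounded (α := ℂ)).mul_const 2⁻¹).mono_left inf_le_left
  refine ⟨_, mul_ne_zero hc0 hΓ,
    (((tendsto_hankelIntegral_zero (by linarith)).comp hinv).const_mul c).congr' ?_⟩
  exact mem_inf_of_right fun z hz => (hc z hz).symm

theorem tendsto_exp_mul_macdonaldK_of_add_two {ν : ℂ} (hν : ∀ n : ℤ, ν ≠ n) {c₁ c₂ : ℂ}
    (h₁ : Tendsto (fun z => exp z * z ^ (1 / 2 : ℂ) * macdonaldK (ν + 1) z)
      (cobounded ℂ ⊓ 𝓟 slitPlane) (𝓝 c₁))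
    (h₂ : Tendsto (fun z => exp z * z ^ (1 / 2 : ℂ) * macdonaldK (ν + 2) z)
      (cobounded ℂ ⊓ 𝓟 slitPlane) (𝓝 c₂)) :
    Tendsto (fun z => exp z * z ^ (1 / 2 : ℂ) * macdonaldK ν z)
      (cobounded ℂ ⊓ 𝓟 slitPlane) (𝓝 c₂) := by
  have hinv : Tendsto (fun z : ℂ => 2 * (ν + 1) * z⁻¹) (cobounded ℂ ⊓ 𝓟 slitPlane) (𝓝 0) := by
    simpa using (tendsto_inv₀_cobounded.const_mul (2 * (ν + 1))).mono_left inf_le_left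
  have h := h₂.sub (hinv.mul h₁)
  rw [zero_mul, sub_zero] at h
  refine h.congr' (mem_inf_of_right fun z hz => ?_)
  beta_reduce
  rw [mem_ofPred_eq, macdonaldK_eq_sub hν (slitPlane_ne_zero hz)]
  ring

theorem exists_tendsto_exp_mul_macdonaldK {ν : ℝ} (hν : ∀ n : ℤ, ν ≠ n) :
    ∃ c ≠ 0, Tendsto (fun z : ℂ => exp z * z ^ (1 / 2 : ℂ) * macdonaldK ν z)
      (cobounded ℂ ⊓ 𝓟 slitPlane) (𝓝 c) := by
  obtain ⟨n, hn⟩ := exists_nat_ge (3 / 2 - ν)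
  induction n generalizing ν with
  | zero => exact exists_tendsto_exp_mul_macdonaldK_of_le hν (by simpa using hn)
  | succ n ih =>
    push_cast at hn
    have hν₁ : ∀ m : ℤ, ν + 1 ≠ m := fun m h => hν (m - 1) (by push_cast; linarith)
    have hν₂ : ∀ m : ℤ, ν + 2 ≠ m := fun m h => hν (m - 2) (by push_cast; linarith)
    obtain ⟨c₁, -, h₁⟩ := ih hν₁ (by linarith)
    obtain ⟨c₂, hc₂, h₂⟩ := ih hν₂ (by linarith)
    push_cast at h₁ h₂
    exact ⟨c₂, hc₂, tendsto_exp_mul_macdonaldK_of_add_two (by exact_mod_cast hν) h₁ h₂⟩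

theorem exists_norm_le_of_macdonaldK_eq_zero {ν : ℝ} (hν : ∀ n : ℤ, ν ≠ n) :
    ∃ R : ℝ, ∀ z ∈ slitPlane, macdonaldK ν z = 0 → ‖z‖ ≤ R := by
  obtain ⟨c, hc, h⟩ := exists_tendsto_exp_mul_macdonaldK hν
  obtain ⟨R, -, hR⟩ := (Metric.hasBasis_cobounded_compl_closedBall (0 : ℂ)).eventually_iff.1
    (eventually_inf_principal.1 (h.eventually_ne hc))
  refine ⟨R, fun z hz hK => ?_⟩
  by_contra hRz
  exact hR (by simpa using hRz) hz (by rw [hK, mul_zero])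

end Asymptotics

section Zeros

/-- The entire function of `w` that equals `K_ν(2e^w)` up to a constant factor. -/
noncomputable def macdonaldKExp (ν w : ℂ) : ℂ :=
  exp (-(ν * w)) * besselClifford (-ν) (exp (2 * w)) - exp (ν * w) * besselClifford ν (exp (2 * w))

theorem differentiable_macdonaldKExp (ν : ℂ) : Differentiable ℂ (macdonaldKExp ν) := by
  have hC : ∀ μ : ℂ, Differentiable ℂ fun w => besselClifford μ (exp (2 * w)) := fun μ =>
    Differentiable.comp (fun y => (hasDerivAt_besselClifford μ y).differentiableAt) (by fun_prop)
  exact (Differentiable.mul (by fun_prop) (hC _)).sub (Differentiable.mul (by fun_prop) (hC _))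

theorem macdonaldK_eq_mul_macdonaldKExp {ν : ℂ} (hν : ∀ n : ℤ, ν ≠ n) {z : ℂ} (hz : z ≠ 0) :
    macdonaldK ν z = Real.pi / 2 / sin (ν * Real.pi) * macdonaldKExp ν (log (z / 2)) := by
  have hz2 : z / 2 ≠ 0 := div_ne_zero hz two_ne_zero
  rw [macdonaldK_eq_besselClifford hν, macdonaldKExp, cpow_def_of_ne_zero hz2,
    cpow_def_of_ne_zero hz2, two_mul, exp_add, exp_log hz2, ← pow_two, mul_neg,
    mul_comm (log (z / 2))]

theorem macdonaldKExp_log_eq_zero {ν : ℂ} (hν : ∀ n : ℤ, ν ≠ n) {z : ℂ} (hz : z ≠ 0)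
    (hK : macdonaldK ν z = 0) : macdonaldKExp ν (log (z / 2)) = 0 := by
  rw [macdonaldK_eq_mul_macdonaldKExp hν hz] at hK
  have hπ : (Real.pi : ℂ) ≠ 0 := ofReal_ne_zero.2 Real.pi_ne_zero
  exact (mul_eq_zero.1 hK).resolve_left
    (div_ne_zero (div_ne_zero hπ two_ne_zero) (sin_mul_pi_ne_zero hν))

theorem tendsto_exp_mul_comap_re_atBot {a : ℝ} (ha : 0 < a) :
    Tendsto (fun w : ℂ => exp (a * w)) (comap re atBot) (𝓝 0) :=
  tendsto_exp_comap_re_atBot.comp <| tendsto_comap_iff.2 <| by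
    simpa [Function.comp_def] using tendsto_comap.const_mul_atBot ha

theorem tendsto_exp_mul_macdonaldKExp {ν : ℝ} (hν : 0 < ν) :
    Tendsto (fun w : ℂ => exp (ν * w) * macdonaldKExp ν w) (comap re atBot)
      (𝓝 (1 / Gamma (1 - ν))) := by
  have hC : ∀ μ : ℂ, Tendsto (fun w => besselClifford μ (exp (2 * w))) (comap re atBot)
      (𝓝 (1 / Gamma (μ + 1))) := fun μ => by
    rw [← besselClifford_zero_right]
    exact (hasDerivAt_besselClifford μ 0).continuousAt.tendsto.comp
      (tendsto_exp_mul_comap_re_atBot two_pos)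
  have h := (hC (-ν)).sub ((tendsto_exp_mul_comap_re_atBot (by positivity : 0 < 2 * ν)).mul (hC ν))
  rw [zero_mul, sub_zero, neg_add_eq_sub] at h
  refine h.congr fun w => ?_
  rw [macdonaldKExp, mul_sub, ← mul_assoc, ← mul_assoc, ← exp_add, ← exp_add]
  rw [add_neg_cancel, exp_zero, one_mul, ← two_mul, ← mul_assoc]
  push_cast
  rfl

theorem exists_macdonaldKExp_ne_zero_of_re_le {ν : ℝ} (hν : ∀ n : ℤ, ν ≠ n) (hpos : 0 < ν) :
    ∃ B : ℝ, ∀ w : ℂ, w.re ≤ B → macdonaldKExp ν w ≠ 0 := by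
  have hΓ : Gamma (1 - ν) ≠ 0 := Gamma_ne_zero fun m h =>
    hν (m + 1) (by exact_mod_cast (by linear_combination -h : (ν : ℂ) = m + 1))
  obtain ⟨B, hB⟩ := eventually_atBot.1 <| eventually_comap.1 <|
    (tendsto_exp_mul_macdonaldKExp hpos).eventually_ne (one_div_ne_zero hΓ)
  exact ⟨B, fun w hw => right_ne_zero_of_mul (hB _ hw w rfl)⟩

theorem finite_inter_zeros_of_differentiable {E : Type*} [NormedAddCommGroup E] [NormedSpace ℂ E]
    [CompleteSpace E] {f : ℂ → E} (hf : Differentiable ℂ f) {z₀ : ℂ} (hz₀ : f z₀ ≠ 0) {K : Set ℂ}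
    (hK : IsCompact K) : (K ∩ f ⁻¹' {0}).Finite := by
  have han : AnalyticOnNhd ℂ f univ := fun z _ => hf.analyticAt z
  have h := hK.finite_sdiff_of_mem_codiscreteWithin
    (codiscreteWithin_mono (subset_univ K) (han.preimage_zero_mem_codiscrete hz₀))
  rwa [preimage_compl, sdiff_compl] at h

theorem finite_zeros_macdonaldK_of_pos {ν : ℝ} (hν : ∀ n : ℤ, ν ≠ n) (hpos : 0 < ν) :
    {z : ℂ | z ∈ slitPlane ∧ macdonaldK ν z = 0}.Finite := by
  obtain ⟨R, hR⟩ := exists_norm_le_of_macdonaldK_eq_zero hν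
  obtain ⟨B, hB⟩ := exists_macdonaldKExp_ne_zero_of_re_le hν hpos
  set K : Set ℂ := Icc B (Real.log (R / 2)) ×ℂ Icc (-Real.pi) Real.pi
  have hfin : (K ∩ macdonaldKExp ν ⁻¹' {0}).Finite :=
    finite_inter_zeros_of_differentiable (differentiable_macdonaldKExp ν)
      (hB B (ofReal_re B).le) (isCompact_Icc.reProdIm isCompact_Icc)
  refine (hfin.image fun w => 2 * exp w).subset fun z ⟨hz, hKz⟩ => ?_
  have hz0 := slitPlane_ne_zero hz
  have hz2 : z / 2 ≠ 0 := div_ne_zero hz0 two_ne_zero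
  have hE := macdonaldKExp_log_eq_zero (by exact_mod_cast hν) hz0 hKz
  refine ⟨log (z / 2), ⟨⟨⟨?_, ?_⟩, (neg_pi_lt_log_im _).le, log_im_le_pi _⟩, hE⟩, ?_⟩
  · exact (lt_of_not_ge fun h => hB _ h hE).le
  · rw [log_re, norm_div, norm_ofNat]
    have := hR z hz hKz
    have := norm_pos_iff.2 hz0
    gcongr
  · simp only [exp_log hz2]
    ring

end Zeros

/-- For real non-integer order, the Macdonald function has only finitely many zeros in
the principal Riemann sheet. -/
theorem macdonaldK_real_order_zeros_finite (ν : ℝ) (hν : ∀ n : ℤ, ν ≠ (n : ℝ)) :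
    {z : ℂ | z ∈ Complex.slitPlane ∧ macdonaldK (ν : ℂ) z = 0}.Finite := by
  rcases lt_trichotomy ν 0 with hneg | h0 | hpos
  · have hν' : ∀ n : ℤ, -ν ≠ n := fun n h => hν (-n) (by push_cast; linarith)
    simpa only [ofReal_neg, macdonaldK_neg] using
      finite_zeros_macdonaldK_of_pos hν' (neg_pos.2 hneg)
  · exact absurd (by simpa using h0) (hν 0)
  · exact finite_zeros_macdonaldK_of_pos hν hpos
end

section
/- Let t ∈ ℝ with t ≠ 0. Then the set { x ∈ ℝ : x > 0 and K_{it}(x) = 0 } is infinite; that is, for purely imaginary order the Macdonald function has infinitely many zeros on the positive real semiaxis. -/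
open Complex Asymptotics

/-!
With `I_ν` the modified Bessel function of the first kind, `K_ν` is a multiple of `I_{-ν} - I_ν`.
For `ν = it` and `x > 0` the two terms are complex conjugates of each other, so `K_{it}(x)` vanishes
as soon as `Im I_{it}(x) = 0`. Near the origin `I_{it}(x) = x^{it} g(x)` with `g` continuous and
`g(0⁺) ≠ 0`; as `x ↓ 0` the factor `x^{it} = exp(i t log x)` winds around the unit circle infinitely
often, so `Im I_{it}` changes sign in every interval `(0, ε)`.
-/

open Filter Set Topology ComplexConjugate

theorem frequently_eq_of_frequently_lt_of_frequently_gt {X α ι : Type*} [TopologicalSpace X]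
    [LinearOrder α] [TopologicalSpace α] [OrderClosedTopology α] {l : Filter X} {p : ι → Prop}
    {s : ι → Set X} (hl : l.HasBasis p s) (hs : ∀ i, p i → IsPreconnected (s i)) {f : X → α}
    (hf : ∀ i, p i → ContinuousOn f (s i)) {c : α} (hlt : ∃ᶠ x in l, f x < c)
    (hgt : ∃ᶠ x in l, c < f x) : ∃ᶠ x in l, f x = c := by
  refine hl.frequently_iff.2 fun i hi => ?_
  obtain ⟨x, hx, hxc⟩ := hl.frequently_iff.1 hlt i hi
  obtain ⟨y, hy, hcy⟩ := hl.frequently_iff.1 hgt i hi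
  exact (hs i hi).intermediate_value hx hy (hf i hi) ⟨hxc.le, hcy.le⟩

theorem frequently_atBot_eq_of_periodic {α β : Type*} [AddCommGroup α] [LinearOrder α]
    [IsOrderedAddMonoid α] [Archimedean α] {f : α → β} {c : α} (hf : Function.Periodic f c)
    (hc : c ≠ 0) (a : α) : ∃ᶠ x in atBot, f x = f a := by
  wlog hc_pos : 0 < c generalizing c
  · exact this hf.neg (neg_ne_zero.2 hc) (neg_pos.2 <| (not_lt.1 hc_pos).lt_of_ne hc)
  refine frequently_atBot.2 fun b => ?_
  obtain ⟨x, hx, hax⟩ := hf.exists_mem_Ioc hc_pos a (b - c)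
  exact ⟨x, by simpa using hx.2, hax.symm⟩

theorem frequently_nhdsGT_cpow_mul_I_eq {t : ℝ} (ht : t ≠ 0) {w : ℂ} (hw : ‖w‖ = 1) :
    ∃ᶠ x : ℝ in 𝓝[>] 0, (x : ℂ) ^ (t * I) = w := by
  have hexp (u : ℝ) : ((Real.exp u : ℝ) : ℂ) ^ (t * I) = exp (↑(t * u) * I) := by
    rw [cpow_def_of_ne_zero (by exact_mod_cast (Real.exp_pos u).ne'),
      ← ofReal_log (Real.exp_pos u).le, Real.log_exp]
    push_cast
    ring_nf
  have hperiodic : Function.Periodic (fun u : ℝ => exp (↑(t * u) * I)) (2 * Real.pi / t) := by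
    intro u
    simp only [mul_add, mul_div_cancel₀ _ ht, ofReal_add, add_mul, ofReal_mul, ofReal_ofNat]
    exact exp_periodic _
  have hfreq := frequently_atBot_eq_of_periodic hperiodic
    (div_ne_zero Real.two_pi_pos.ne' ht) (arg w / t)
  refine Real.tendsto_exp_atBot_nhdsGT.frequently (hfreq.mono fun u hu => ?_)
  rw [hexp, hu, mul_div_cancel₀ _ ht]
  simpa [hw] using norm_mul_exp_arg_mul_I w

theorem mapClusterPt_cpow_mul_I_mul {t : ℝ} (ht : t ≠ 0) {g : ℝ → ℂ} {c w : ℂ}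
    (hg : Tendsto g (𝓝[>] 0) (𝓝 c)) (hw : ‖w‖ = 1) :
    MapClusterPt (w * c) (𝓝[>] 0) fun x : ℝ => (x : ℂ) ^ (t * I) * g x := by
  refine mapClusterPt_iff_frequently.2 fun s hs => ?_
  have hmem : ∀ᶠ x in 𝓝[>] 0, w * g x ∈ s := (hg.const_mul w).eventually_mem hs
  exact ((frequently_nhdsGT_cpow_mul_I_eq ht hw).and_eventually hmem).mono
    fun x ⟨hx, hxs⟩ => by rwa [hx]

theorem frequently_nhdsGT_im_cpow_mul_I_mul_eq_zero {t : ℝ} (ht : t ≠ 0) {g : ℝ → ℂ} {c : ℂ}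
    (hcont : ContinuousOn g (Ioi 0)) (hg : Tendsto g (𝓝[>] 0) (𝓝 c)) (hc : c ≠ 0) :
    ∃ᶠ x : ℝ in 𝓝[>] 0, ((x : ℂ) ^ (t * I) * g x).im = 0 := by
  have hneg : ∃ᶠ x : ℝ in 𝓝[>] 0, ((x : ℂ) ^ (t * I) * g x).im < 0 := by
    refine (mapClusterPt_cpow_mul_I_mul ht hg (w := -(‖c‖ * I) / c) (by simp [hc])).frequently
      ((isOpen_lt continuous_im continuous_const).mem_nhds ?_)
    simp [hc]
  have hpos : ∃ᶠ x : ℝ in 𝓝[>] 0, 0 < ((x : ℂ) ^ (t * I) * g x).im := by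
    refine (mapClusterPt_cpow_mul_I_mul ht hg (w := ‖c‖ * I / c) (by simp [hc])).frequently
      ((isOpen_lt continuous_const continuous_im).mem_nhds ?_)
    simp [hc]
  have hpow : ContinuousOn (fun x : ℝ => (x : ℂ) ^ (t * I)) (Ioi 0) := fun x hx =>
    (continuousAt_ofReal_cpow_const x _ (.inr (ne_of_gt hx))).continuousWithinAt
  have him : ContinuousOn (fun x : ℝ => ((x : ℂ) ^ (t * I) * g x).im) (Ioi 0) :=
    continuous_im.comp_continuousOn (hpow.mul hcont)
  exact frequently_eq_of_frequently_lt_of_frequently_gt (nhdsGT_basis 0)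
    (fun _ _ => isPreconnected_Ioo) (fun _ _ => him.mono Ioo_subset_Ioi_self) hneg hpos

-- If `a` is a nonpositive integer, the terms vanish from some index on because `x / 0 = 0`.
theorem summable_pow_div_factorial_mul_ascPochhammer (a w : ℂ) :
    Summable fun k : ℕ => w ^ k / ((k.factorial : ℂ) * (ascPochhammer ℂ k).eval a) := by
  refine summable_of_ratio_norm_eventually_le (r := 1 / 2) (by norm_num) ?_
  filter_upwards [tendsto_natCast_atTop_atTop.eventually_ge_atTop (2 * ‖w‖ + ‖a‖ + 1)] with k hk
  have hratio : ‖w / ((k + 1) * (a + k))‖ ≤ 1 / 2 := by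
    have hak : 1 ≤ ‖a + k‖ := by
      have := norm_sub_le (a + k) a
      rw [add_sub_cancel_left, norm_natCast] at this
      linarith [norm_nonneg w]
    have hk1 : ‖(k + 1 : ℂ)‖ = k + 1 := by exact_mod_cast norm_natCast (k + 1)
    rw [norm_div, norm_mul, hk1, div_le_iff₀ (by positivity)]
    nlinarith [norm_nonneg a, norm_nonneg w]
  calc ‖w ^ (k + 1) / (((k + 1).factorial : ℂ) * (ascPochhammer ℂ (k + 1)).eval a)‖
      = ‖w / ((k + 1) * (a + k))‖ * ‖w ^ k / (k.factorial * (ascPochhammer ℂ k).eval a)‖ := by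
        rw [← norm_mul, div_mul_div_comm, ascPochhammer_succ_eval, Nat.factorial_succ]
        push_cast
        ring_nf
    _ ≤ 1 / 2 * ‖w ^ k / (k.factorial * (ascPochhammer ℂ k).eval a)‖ := by gcongr

theorem continuous_macdonaldS (a : ℂ) : Continuous (macdonaldS a) := by
  rw [continuous_iff_continuousAt]
  intro z
  have hball : ContinuousOn (macdonaldS a) (Metric.ball 0 (‖z‖ + 1)) := by
    have hsummable :=
      (summable_pow_div_factorial_mul_ascPochhammer a (((‖z‖ + 1) ^ 2 / 4 : ℝ) : ℂ)).norm
    refine continuousOn_tsum (fun k => by fun_prop) hsummable fun k v hv => ?_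
    have hv_sq : ‖v ^ 2 / 4‖ ≤ ‖(((‖z‖ + 1) ^ 2 / 4 : ℝ) : ℂ)‖ := by
      rw [norm_real, Real.norm_of_nonneg (by positivity), norm_div, norm_pow, RCLike.norm_ofNat]
      gcongr
      exact (mem_ball_zero_iff.1 hv).le
    rw [norm_div (_ ^ k), norm_div (_ ^ k), norm_pow _ k, norm_pow _ k]
    gcongr
  exact hball.continuousAt (Metric.isOpen_ball.mem_nhds (by simp))

theorem macdonaldS_zero (a : ℂ) : macdonaldS a 0 = 1 := by
  rw [macdonaldS, tsum_eq_single 0 fun k hk => by simp [hk]]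
  simp

theorem conj_macdonaldS (a z : ℂ) : conj (macdonaldS a z) = macdonaldS (conj a) (conj z) := by
  have hpoch (k : ℕ) : conj ((ascPochhammer ℂ k).eval a) = (ascPochhammer ℂ k).eval (conj a) := by
    rw [ascPochhammer_eval₂ (starRingEnd ℂ) k (conj a), Polynomial.eval₂_at_apply]
  simp [macdonaldS, conj_tsum, hpoch, conj_ofNat]

/-- The modified Bessel function of the first kind `I_ν(z)`, normalised so that
`K_ν = (π / 2) (I_{-ν} - I_ν) / sin (ν π)`; powers are principal, as in `macdonaldK`. -/
noncomputable def modifiedBesselI (ν z : ℂ) : ℂ :=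
  (z / 2) ^ ν / Gamma (1 + ν) * macdonaldS (1 + ν) z

theorem macdonaldK_eq_modifiedBesselI (ν z : ℂ) :
    macdonaldK ν z =
      Real.pi / 2 / sin (ν * Real.pi) * (modifiedBesselI (-ν) z - modifiedBesselI ν z) := by
  simp only [macdonaldK, modifiedBesselI, sub_eq_add_neg]

theorem conj_modifiedBesselI (ν : ℂ) {x : ℝ} (hx : 0 ≤ x) :
    conj (modifiedBesselI ν x) = modifiedBesselI (conj ν) x := by
  have harg : ((x : ℂ) / 2).arg ≠ Real.pi := by
    rw [← ofReal_ofNat, ← ofReal_div, arg_ofReal_of_nonneg (by positivity)]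
    exact Real.pi_ne_zero.symm
  have hpow : conj (((x : ℂ) / 2) ^ ν) = ((x : ℂ) / 2) ^ conj ν := by
    simp [cpow_conj _ _ harg, conj_ofNat]
  simp [modifiedBesselI, hpow, conj_macdonaldS, ← Gamma_conj]

theorem macdonaldK_eq_zero_of_im_modifiedBesselI_eq_zero {t x : ℝ} (hx : 0 ≤ x)
    (him : (modifiedBesselI (t * I) x).im = 0) : macdonaldK (t * I) x = 0 := by
  have hreal : modifiedBesselI (-(t * I)) x = modifiedBesselI (t * I) x := by
    rw [← conj_eq_iff_im.2 him, conj_modifiedBesselI _ hx]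
    simp
  rw [macdonaldK_eq_modifiedBesselI, hreal, sub_self, mul_zero]

theorem modifiedBesselI_eq_cpow_mul (ν : ℂ) {x : ℝ} (hx : 0 ≤ x) :
    modifiedBesselI ν x = x ^ ν * ((1 / 2 : ℂ) ^ ν / Gamma (1 + ν) * macdonaldS (1 + ν) x) := by
  have hpow : ((x : ℂ) / 2) ^ ν = x ^ ν * (1 / 2 : ℂ) ^ ν := by
    simpa [div_eq_mul_inv] using mul_cpow_ofReal_nonneg hx (by norm_num : (0 : ℝ) ≤ 1 / 2) ν
  rw [modifiedBesselI, hpow]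
  ring

theorem frequently_nhdsGT_im_modifiedBesselI_eq_zero {t : ℝ} (ht : t ≠ 0) :
    ∃ᶠ x : ℝ in 𝓝[>] 0, (modifiedBesselI (t * I) x).im = 0 := by
  set C : ℂ := (1 / 2 : ℂ) ^ (t * I) / Gamma (1 + t * I)
  have hC_ne : C ≠ 0 :=
    div_ne_zero (by simp [cpow_eq_zero_iff]) (Gamma_ne_zero_of_re_pos (by simp))
  have hcont : Continuous fun x : ℝ => C * macdonaldS (1 + t * I) x :=
    ((continuous_macdonaldS _).comp continuous_ofReal).const_mul C
  have hlim : Tendsto (fun x : ℝ => C * macdonaldS (1 + t * I) x) (𝓝[>] 0) (𝓝 C) := by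
    simpa [macdonaldS_zero] using (hcont.tendsto 0).mono_left nhdsWithin_le_nhds
  refine ((frequently_nhdsGT_im_cpow_mul_I_mul_eq_zero ht hcont.continuousOn hlim
    hC_ne).and_eventually self_mem_nhdsWithin).mono fun x ⟨him, hx⟩ => ?_
  rwa [modifiedBesselI_eq_cpow_mul _ (le_of_lt hx)]

/-- For purely imaginary order, the Macdonald function has infinitely many zeros on the
positive real semiaxis. -/
theorem macdonaldK_imaginary_order_zeros_infinite (t : ℝ) (ht : t ≠ 0) :
    {x : ℝ | 0 < x ∧ macdonaldK ((t : ℂ) * Complex.I) (x : ℂ) = 0}.Infinite := by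
  have hzeros : ∃ᶠ x : ℝ in 𝓝[>] 0, 0 < x ∧ macdonaldK (t * I) x = 0 :=
    ((frequently_nhdsGT_im_modifiedBesselI_eq_zero ht).and_eventually self_mem_nhdsWithin).mono
      fun x ⟨him, hx⟩ => ⟨hx, macdonaldK_eq_zero_of_im_modifiedBesselI_eq_zero (le_of_lt hx) him⟩
  exact frequently_cofinite_iff_infinite.1 <|
    hzeros.filter_mono ((nhdsGT_le_nhdsNE 0).trans (nhdsNE_le_cofinite 0))
end
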